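/- arXiv:1212.1424 — 2 statements merged into one kernel-verified Lean document; each statement's English description precedes it below -/
import Mathlib

section
/- Let Q be a Euclidean quiver and C an abelian, extension-closed subcategory of rep(Q) contained in the regular representations Reg. If C contains an indecomposable non-exceptional representation X, then C contains infinitely many pairwise non-isomorphic indecomposable representations. -/
open Matrix BigOperators

/-- A finite quiver: `n` vertices, `a` arrows with source and target maps. -/
structure FinQuiver where
  n : ℕ
  a : ℕ
  src : Fin a → Fin n
  tgt : Fin a → Fin n

namespace FinQuiver

/-- A finite quiver is acyclic iff it admits a topological ordering of vertices. -/
def Acyclic (Q : FinQuiver) : Prop :=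
  ∃ h : Fin Q.n → ℕ, ∀ x, h (Q.src x) < h (Q.tgt x)

/-- Connectivity of the underlying graph. -/
def Connected (Q : FinQuiver) : Prop :=
  ∀ S : Finset (Fin Q.n), S.Nonempty → S ≠ Finset.univ →
    ∃ x, (Q.src x ∈ S ∧ Q.tgt x ∉ S) ∨ (Q.tgt x ∈ S ∧ Q.src x ∉ S)

/-- The Euler form ⟨d,e⟩ = Σ_i d_i e_i − Σ_{α : i → j} d_i e_j. -/
def euler (Q : FinQuiver) (d e : Fin Q.n → ℤ) : ℤ :=
  (∑ i, d i * e i) - ∑ x, d (Q.src x) * e (Q.tgt x)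

/-- A (possibly disconnected) Dynkin quiver: acyclic with positive definite Tits form. -/
def IsDynkin (Q : FinQuiver) : Prop :=
  Q.Acyclic ∧ ∀ d : Fin Q.n → ℤ, d ≠ 0 → 0 < Q.euler d d

/-- `δ` is the null root: positive, isotropic, and every isotropic vector is an
integer multiple of `δ`. -/
def IsNullRoot (Q : FinQuiver) (δ : Fin Q.n → ℤ) : Prop :=
  (∀ i, 0 < δ i) ∧ Q.euler δ δ = 0 ∧
    ∀ d : Fin Q.n → ℤ, Q.euler d d = 0 → ∃ m : ℤ, d = m • δ

/-- A Euclidean (affine) quiver: connected, acyclic, positive semidefinite Tits form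
with a null root. -/
def IsEuclidean (Q : FinQuiver) : Prop :=
  Q.Acyclic ∧ Q.Connected ∧ (∀ d, 0 ≤ Q.euler d d) ∧ ∃ δ, Q.IsNullRoot δ

end FinQuiver

/-- A finite-dimensional representation of `Q` over `k`: dimensions at each vertex,
and a matrix for each arrow. -/
structure QRep (k : Type) [Field k] (Q : FinQuiver) where
  d : Fin Q.n → ℕ
  mat : ∀ x : Fin Q.a, Matrix (Fin (d (Q.tgt x))) (Fin (d (Q.src x))) k

namespace QRep

variable {k : Type} [Field k] {Q : FinQuiver}

/-- The dimension vector of a representation, as an integer vector. -/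
def dimVec (M : QRep k Q) : Fin Q.n → ℤ := fun i => (M.d i : ℤ)

/-- The space of morphisms of representations `M → N`. -/
def homSpace (M N : QRep k Q) :
    Submodule k (∀ i, Matrix (Fin (N.d i)) (Fin (M.d i)) k) where
  carrier := {f | ∀ x, f (Q.tgt x) * M.mat x = N.mat x * f (Q.src x)}
  add_mem' := by
    intro f g hf hg x
    simp only [Pi.add_apply, Matrix.add_mul, Matrix.mul_add, hf x, hg x]
  zero_mem' := by intro x; simp
  smul_mem' := by
    intro c f hf x
    simp only [Pi.smul_apply, Matrix.smul_mul, Matrix.mul_smul, hf x]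

/-- The standard map whose kernel is `Hom(M,N)` and cokernel is `Ext¹(M,N)`. -/
def extMap (M N : QRep k Q) :
    (∀ i, Matrix (Fin (N.d i)) (Fin (M.d i)) k) →ₗ[k]
    (∀ x : Fin Q.a, Matrix (Fin (N.d (Q.tgt x))) (Fin (M.d (Q.src x))) k) where
  toFun f := fun x => f (Q.tgt x) * M.mat x - N.mat x * f (Q.src x)
  map_add' := by
    intro f g; funext x
    simp only [Pi.add_apply, Matrix.add_mul, Matrix.mul_add]
    abel
  map_smul' := by
    intro c f; funext x
    simp only [Pi.smul_apply, Matrix.smul_mul, Matrix.mul_smul, RingHom.id_apply,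
      smul_sub]

/-- dim_k Hom(M,N). -/
noncomputable def homDim (M N : QRep k Q) : ℕ :=
  Module.finrank k (homSpace M N)

/-- dim_k Ext¹(M,N), defined as the dimension of the cokernel of `extMap`. -/
noncomputable def extDim (M N : QRep k Q) : ℕ :=
  Module.finrank k
    ((∀ x : Fin Q.a, Matrix (Fin (N.d (Q.tgt x))) (Fin (M.d (Q.src x))) k) ⧸
      LinearMap.range (extMap M N))

/-- Isomorphism of representations. -/
def IsoRep (M N : QRep k Q) : Prop :=
  ∃ f ∈ homSpace M N, ∀ i, Function.Bijective (Matrix.mulVecLin (f i))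

/-- `L` is (the source of a monomorphism into) a subrepresentation of `M`. -/
def IsSubrep (L M : QRep k Q) : Prop :=
  ∃ f ∈ homSpace L M, ∀ i, Function.Injective (Matrix.mulVecLin (f i))

/-- `L` is a direct summand of `M` (split monomorphism with retraction). -/
def IsSummand (L M : QRep k Q) : Prop :=
  ∃ f ∈ homSpace L M, ∃ g ∈ homSpace M L, ∀ i, g i * f i = 1

/-- `M` is indecomposable: nonzero, and its endomorphism ring has no nontrivial
idempotents. -/
def Indec (M : QRep k Q) : Prop :=
  (∃ i, M.d i ≠ 0) ∧
    ∀ f ∈ homSpace M M, (∀ i, f i * f i = f i) → f = 0 ∨ f = 1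

/-- An exceptional representation: indecomposable and rigid. -/
def Exceptional (M : QRep k Q) : Prop :=
  Indec M ∧ extDim M M = 0

/-- `(f, g)` form a short exact sequence `0 → A → B → C → 0` of representations. -/
def IsSES (A B C : QRep k Q)
    (f : ∀ i, Matrix (Fin (B.d i)) (Fin (A.d i)) k)
    (g : ∀ i, Matrix (Fin (C.d i)) (Fin (B.d i)) k) : Prop :=
  f ∈ homSpace A B ∧ g ∈ homSpace B C ∧
    ∀ i, Function.Injective (Matrix.mulVecLin (f i)) ∧
      Function.Surjective (Matrix.mulVecLin (g i)) ∧
      LinearMap.range (Matrix.mulVecLin (f i)) = LinearMap.ker (Matrix.mulVecLin (g i))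

/-- A thick (= abelian and extension-closed, since rep(Q) is hereditary) full
subcategory: closed under isomorphism, direct summands and two-out-of-three for
short exact sequences. -/
def Thick (P : QRep k Q → Prop) : Prop :=
  (∀ M N, IsoRep M N → P M → P N) ∧
  (∀ L M, IsSummand L M → P M → P L) ∧
  (∀ A B C f g, IsSES A B C f g →
    ((P A → P B → P C) ∧ (P A → P C → P B) ∧ (P B → P C → P A)))

/-- `P` is the smallest thick subcategory containing `S`. -/
def GeneratedBy (P : QRep k Q → Prop) (S : Set (QRep k Q)) : Prop :=
  Thick P ∧ (∀ X ∈ S, P X) ∧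
    ∀ P' : QRep k Q → Prop, Thick P' → (∀ X ∈ S, P' X) → ∀ M, P M → P' M

/-- An exceptional sequence. -/
def ExcSeq {r : ℕ} (E : Fin r → QRep k Q) : Prop :=
  (∀ i, Exceptional (E i) ∧ homDim (E i) (E i) = 1) ∧
    ∀ i j : Fin r, i < j → homDim (E i) (E j) = 0 ∧ extDim (E i) (E j) = 0

/-- King's criterion for `⟨d,−⟩`-semi-stability. -/
def SemiStable (d : Fin Q.n → ℤ) (M : QRep k Q) : Prop :=
  Q.euler d M.dimVec = 0 ∧ ∀ L : QRep k Q, IsSubrep L M → Q.euler d L.dimVec ≤ 0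

/-- `M` is regular: every indecomposable summand pairs to zero with the null root. -/
def RegularRep (δ : Fin Q.n → ℤ) (M : QRep k Q) : Prop :=
  ∀ L, IsSummand L M → Indec L → Q.euler δ L.dimVec = 0

/-- `M` is in the right perpendicular category of `V`. -/
def RPerp (V M : QRep k Q) : Prop := homDim V M = 0 ∧ extDim V M = 0

/-- `M` is in the left perpendicular category of `V`. -/
def LPerp (V M : QRep k Q) : Prop := homDim M V = 0 ∧ extDim M V = 0

/-- `P` is a projective representation (Ext¹(P,−) = 0). -/
def IsProjRep (P : QRep k Q) : Prop := ∀ M : QRep k Q, extDim P M = 0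

end QRep

/-- `α` is a Schur root: the dimension vector of an indecomposable representation
with trivial endomorphism ring. -/
def IsSchurRoot (k : Type) [Field k] (Q : FinQuiver) (α : Fin Q.n → ℤ) : Prop :=
  ∃ M : QRep k Q, M.dimVec = α ∧ QRep.Indec M ∧ QRep.homDim M M = 1

/-- `ext(α,β) = 0`: some representations of these dimension vectors have no
extensions. -/
def ExtZero (k : Type) [Field k] (Q : FinQuiver) (α β : Fin Q.n → ℤ) : Prop :=
  ∃ M N : QRep k Q, M.dimVec = α ∧ N.dimVec = β ∧ QRep.extDim M N = 0

/-- Kac's characterization of the canonical decomposition: `c` is the canonical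
decomposition of `d` iff the entries sum to `d`, are Schur roots, and are pairwise
ext-orthogonal. -/
def IsCanonDecomp (k : Type) [Field k] (Q : FinQuiver) (d : Fin Q.n → ℤ)
    (c : List (Fin Q.n → ℤ)) : Prop :=
  c.sum = d ∧ (∀ α ∈ c, IsSchurRoot k Q α) ∧
    ∀ i j : Fin c.length, i ≠ j → ExtZero k Q (c.get i) (c.get j)


/-! ### Helper material: linear-map version of representations -/

namespace QRep

section Helpers

variable {k : Type} [Field k] {Q : FinQuiver}

/-- The vector space at a vertex. -/
abbrev V (M : QRep k Q) (i : Fin Q.n) : Type := Fin (M.d i) → k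

/-- The linear map at an arrow. -/
noncomputable def mp (M : QRep k Q) (x : Fin Q.a) : M.V (Q.src x) →ₗ[k] M.V (Q.tgt x) :=
  Matrix.mulVecLin (M.mat x)

/-- Families of linear maps. -/
abbrev Fam (M N : QRep k Q) : Type := ∀ i, M.V i →ₗ[k] N.V i

/-- Morphisms in terms of linear maps. -/
def HomL (M N : QRep k Q) (f : Fam M N) : Prop :=
  ∀ x v, f (Q.tgt x) (M.mp x v) = N.mp x (f (Q.src x) v)

/-- The family of matrices of a family of linear maps. -/
noncomputable def toM {M N : QRep k Q} (f : Fam M N) :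
    ∀ i, Matrix (Fin (N.d i)) (Fin (M.d i)) k :=
  fun i => LinearMap.toMatrix' (f i)

/-- The family of linear maps of a family of matrices. -/
noncomputable def ofM {M N : QRep k Q} (f : ∀ i, Matrix (Fin (N.d i)) (Fin (M.d i)) k) :
    Fam M N :=
  fun i => Matrix.mulVecLin (f i)

lemma mulVecLin_toM {M N : QRep k Q} (f : Fam M N) (i) : Matrix.mulVecLin (toM f i) = f i := by
  rw [← Matrix.toLin'_apply']; exact Matrix.toLin'_toMatrix' _

lemma toM_ofM {M N : QRep k Q} (f : ∀ i, Matrix (Fin (N.d i)) (Fin (M.d i)) k) :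
    toM (M := M) (N := N) (ofM f) = f := by
  funext i
  unfold toM ofM
  rw [← Matrix.toLin'_apply']; exact LinearMap.toMatrix'_toLin' _

lemma mulVecLin_inj {m n : ℕ} {A B : Matrix (Fin m) (Fin n) k}
    (h : Matrix.mulVecLin A = Matrix.mulVecLin B) : A = B := by
  rw [← Matrix.toLin'_apply', ← Matrix.toLin'_apply'] at h
  exact Matrix.toLin'.injective h

lemma toM_mem {M N : QRep k Q} {f : Fam M N} (hf : HomL M N f) : toM f ∈ homSpace M N := by
  intro x
  apply mulVecLin_inj
  rw [Matrix.mulVecLin_mul, Matrix.mulVecLin_mul, mulVecLin_toM, mulVecLin_toM]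
  ext1 v
  exact LinearMap.ext (fun w => hf x (LinearMap.single k (fun _ => k) v w))

lemma ofM_hom {M N : QRep k Q} {f : ∀ i, Matrix (Fin (N.d i)) (Fin (M.d i)) k}
    (hf : f ∈ homSpace M N) : HomL M N (ofM f) := by
  intro x v
  have := congrArg (fun A => Matrix.mulVecLin A v) (hf x)
  simp only [Matrix.mulVecLin_mul] at this
  exact this

/-- Linear version of indecomposability. -/
def IndecL (M : QRep k Q) : Prop :=
  (∃ i, M.d i ≠ 0) ∧ ∀ f : Fam M M, HomL M M f → (∀ i v, f i (f i v) = f i v) →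
    (∀ i v, f i v = 0) ∨ (∀ i v, f i v = v)

lemma indecL_iff (M : QRep k Q) : Indec M ↔ IndecL M := by
  unfold Indec IndecL
  refine and_congr_right fun _ => ⟨fun h f hf hi => ?_, fun h f hf hi => ?_⟩
  · rcases h (toM f) (toM_mem hf) (fun i => by
      apply mulVecLin_inj
      rw [Matrix.mulVecLin_mul, mulVecLin_toM]
      exact LinearMap.ext (hi i)) with h | h
    · left; intro i v
      rw [← mulVecLin_toM f i, h]; simp
    · right; intro i v
      rw [← mulVecLin_toM f i, h]; simp
  · rcases h (ofM f) (ofM_hom hf) (fun i v => by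
      have := congrArg (fun A => Matrix.mulVecLin A v) (hi i)
      simp only [Matrix.mulVecLin_mul] at this
      exact this) with h | h
    · left; funext i
      apply mulVecLin_inj
      ext1 v
      exact LinearMap.ext (fun w => by simpa [ofM] using h i (LinearMap.single k (fun _ => k) v w))
    · right; funext i
      apply mulVecLin_inj
      ext1 v
      exact LinearMap.ext (fun w => by simpa [ofM] using h i (LinearMap.single k (fun _ => k) v w))

/-- Self-extension: some cocycle is not a coboundary. -/
def SelfExt (M : QRep k Q) : Prop :=
  ∃ γ : ∀ x, M.V (Q.src x) →ₗ[k] M.V (Q.tgt x),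
    ¬ ∃ φ : Fam M M, ∀ x v, γ x v = φ (Q.tgt x) (M.mp x v) - M.mp x (φ (Q.src x) v)

lemma selfExt_of {M : QRep k Q} (h : extDim M M ≠ 0) : SelfExt M := by
  by_contra hs
  apply h
  have : LinearMap.range (extMap M M) = ⊤ := by
    rw [eq_top_iff]
    intro c _
    by_contra hc
    apply hs
    refine ⟨fun x => Matrix.mulVecLin (c x), ?_⟩
    rintro ⟨φ, hφ⟩
    apply hc
    refine ⟨toM φ, ?_⟩
    funext x
    apply mulVecLin_inj
    refine LinearMap.ext fun v => ?_
    rw [hφ x v]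
    change Matrix.mulVecLin (toM φ (Q.tgt x) * M.mat x - M.mat x * toM φ (Q.src x)) v = _
    rw [← mulVecLin_toM φ, ← mulVecLin_toM φ]
    simp [mp, Matrix.mulVec_mulVec]
  unfold extDim
  rw [this]
  exact Module.finrank_zero_of_subsingleton

lemma realize (W : Fin Q.n → Type) [∀ i, AddCommGroup (W i)] [∀ i, Module k (W i)]
    [∀ i, FiniteDimensional k (W i)] (m : ∀ x, W (Q.src x) →ₗ[k] W (Q.tgt x)) :
    ∃ (M : QRep k Q) (e : ∀ i, W i ≃ₗ[k] M.V i), ∀ x v, M.mp x (e _ v) = e _ (m x v) := by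
  let e : ∀ i, W i ≃ₗ[k] (Fin (Module.finrank k (W i)) → k) :=
    fun i => (Module.finBasis k (W i)).equivFun
  refine ⟨⟨fun i => Module.finrank k (W i), fun x =>
    LinearMap.toMatrix' ((e (Q.tgt x)).toLinearMap ∘ₗ m x ∘ₗ (e (Q.src x)).symm.toLinearMap)⟩,
    e, fun x v => ?_⟩
  unfold mp
  rw [← Matrix.toLin'_apply']
  simp only [Matrix.toLin'_toMatrix']
  simp

lemma exists_ginv {A B : Type} [AddCommGroup A] [AddCommGroup B] [Module k A] [Module k B]
    (g : A →ₗ[k] B) : ∃ t : B →ₗ[k] A, ∀ v, g (t (g v)) = g v := by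
  obtain ⟨s, hs⟩ := g.rangeRestrict.exists_rightInverse_of_surjective (LinearMap.range_rangeRestrict g)
  obtain ⟨t, ht⟩ := LinearMap.exists_extend s
  refine ⟨t, fun v => ?_⟩
  have h1 : t (g v) = s (g.rangeRestrict v) := by
    rw [← ht]; rfl
  have h2 := congrArg Subtype.val (LinearMap.congr_fun hs (g.rangeRestrict v))
  rw [h1]
  exact h2

lemma exists_sub (M : QRep k Q) (U : ∀ i, Submodule k (M.V i))
    (hU : ∀ x, ∀ v ∈ U (Q.src x), M.mp x v ∈ U (Q.tgt x)) :
    ∃ (L : QRep k Q) (s : Fam L M), HomL L M s ∧ (∀ i, Function.Injective (s i)) ∧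
      ∀ i v, v ∈ U i ↔ ∃ u, s i u = v := by
  obtain ⟨L, e, he⟩ := realize (fun i => U i) (fun x => (M.mp x).restrict (hU x))
  refine ⟨L, fun i => (U i).subtype ∘ₗ (e i).symm.toLinearMap, ?_, ?_, ?_⟩
  · intro x v
    obtain ⟨u, rfl⟩ := (e _).surjective v
    rw [he]
    simp
  · intro i
    exact (U i).injective_subtype.comp (e i).symm.injective
  · intro i v
    constructor
    · intro h
      exact ⟨e i ⟨v, h⟩, by simp⟩
    · rintro ⟨u, rfl⟩
      simp

/-- factor a family through an injective family -/
lemma exists_factor {L M N : QRep k Q} {s : Fam L M} (hs : HomL L M s)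
    (hinj : ∀ i, Function.Injective (s i)) {f : Fam N M} (hf : HomL N M f)
    (h : ∀ i v, ∃ u, s i u = f i v) :
    ∃ g : Fam N L, HomL N L g ∧ ∀ i v, s i (g i v) = f i v := by
  have key : ∀ i, ∃ g : N.V i →ₗ[k] L.V i, ∀ v, s i (g v) = f i v := by
    intro i
    obtain ⟨t, ht⟩ := exists_ginv (s i)
    refine ⟨t ∘ₗ f i, fun v => ?_⟩
    obtain ⟨u, hu⟩ := h i v
    simp [← hu, ht]
  choose g hg using key
  refine ⟨g, fun x v => hinj _ ?_, hg⟩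
  rw [hg, hf, hs, hg]

/-- total dimension -/
def tdim (M : QRep k Q) : ℕ := ∑ i, M.d i

section thick

lemma thick_summand {C : QRep k Q → Prop} (hC : Thick C) {L M : QRep k Q} {s : Fam L M} {r : Fam M L} (hs : HomL L M s)
    (hr : HomL M L r) (h : ∀ i v, r i (s i v) = v) (hM : C M) : C L := by
  refine hC.2.1 L M ⟨toM s, toM_mem hs, toM r, toM_mem hr, fun i => ?_⟩ hM
  apply mulVecLin_inj
  rw [Matrix.mulVecLin_mul, mulVecLin_toM, mulVecLin_toM, Matrix.mulVecLin_one]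
  exact LinearMap.ext (h i)

lemma isSES_of {C : QRep k Q → Prop} (hC : Thick C) {A B D : QRep k Q} {f : Fam A B} {g : Fam B D} (hf : HomL A B f) (hg : HomL B D g)
    (h1 : ∀ i, Function.Injective (f i)) (h2 : ∀ i, Function.Surjective (g i))
    (h3 : ∀ i v, g i v = 0 ↔ ∃ u, f i u = v) :
    ((C A → C B → C D) ∧ (C A → C D → C B) ∧ (C B → C D → C A)) := by
  refine hC.2.2 A B D (toM f) (toM g) ⟨toM_mem hf, toM_mem hg, fun i => ?_⟩
  rw [mulVecLin_toM, mulVecLin_toM]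
  refine ⟨h1 i, h2 i, ?_⟩
  ext v
  rw [LinearMap.mem_ker, h3, LinearMap.mem_range]

/-- extension by a cocycle -/
lemma exists_ext {C : QRep k Q → Prop} (hC : Thick C) {A B : QRep k Q} (hA : C A) (hB : C B)
    (γ : ∀ x, B.V (Q.src x) →ₗ[k] A.V (Q.tgt x)) :
    ∃ (W : QRep k Q) (e : ∀ i, (A.V i × B.V i) ≃ₗ[k] W.V i), C W ∧
      ∀ x v, W.mp x (e _ v) = e _ (A.mp x v.1 + γ x v.2, B.mp x v.2) := by
  obtain ⟨W, e, he⟩ := realize (k := k) (Q := Q) (fun i => A.V i × B.V i)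
    (fun x => ((A.mp x).coprod (γ x)).prod ((B.mp x) ∘ₗ LinearMap.snd k _ _))
  refine ⟨W, e, ?_, fun x v => by rw [he]; simp⟩
  refine (isSES_of hC (A := A) (B := W) (D := B)
    (f := fun i => (e i).toLinearMap ∘ₗ LinearMap.inl k _ _)
    (g := fun i => LinearMap.snd k _ _ ∘ₗ (e i).symm.toLinearMap) ?_ ?_ ?_ ?_ ?_).2.1 hA hB
  · intro x v
    simp [he]
  · intro x v
    obtain ⟨u, rfl⟩ := (e _).surjective v
    rw [he]; simp
  · intro i
    exact (e i).injective.comp LinearMap.inl_injective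
  · intro i b
    exact ⟨e i (0, b), by simp⟩
  · intro i v
    obtain ⟨⟨a, b⟩, rfl⟩ := (e _).surjective v
    simp [eq_comm]

/-- image and kernel closure -/
lemma thick_image {C : QRep k Q → Prop} (hC : Thick C) {A B I : QRep k Q} (hA : C A) (hB : C B) {f : Fam A B} (hf : HomL A B f)
    {s : Fam I B} (hs : HomL I B s) (hinj : ∀ i, Function.Injective (s i))
    (hr : ∀ i v, (∃ u, f i u = v) ↔ ∃ u, s i u = v) : C I := by
  choose τ hτ using fun i => exists_ginv (f i)
  obtain ⟨W, e, hW, he⟩ := exists_ext hC hA hB (fun x =>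
    τ _ ∘ₗ (B.mp x ∘ₗ f _ ∘ₗ τ _ - f _ ∘ₗ τ _ ∘ₗ B.mp x))
  have hp : ∀ i v, f i (τ i (s i v)) = s i v := by
    intro i v
    obtain ⟨u, hu⟩ := (hr i (s i v)).2 ⟨v, rfl⟩
    rw [← hu, hτ]
  obtain ⟨g, hg, hg'⟩ := exists_factor (N := W) hs hinj
    (f := fun i => ((f i).coprod (f i ∘ₗ τ i)) ∘ₗ (e i).symm.toLinearMap)
    (by
      intro x v
      obtain ⟨⟨a, b⟩, rfl⟩ := (e _).surjective v
      rw [he]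
      simp only [LinearMap.comp_apply, LinearEquiv.coe_coe, LinearEquiv.symm_apply_apply,
        LinearMap.coprod_apply, map_add, map_sub, LinearMap.sub_apply, hτ]
      rw [hf, ← hf x (τ _ b), hτ]
      abel)
    (by
      intro i v
      rw [← hr]
      exact ⟨((e i).symm v).1 + τ i ((e i).symm v).2, by simp⟩)
  refine thick_summand hC (L := I) (M := W) (r := g)
    (s := fun i => (e i).toLinearMap ∘ₗ LinearMap.inr k _ _ ∘ₗ s i) ?_ hg ?_ hW
  · intro x v
    simp only [LinearMap.comp_apply, LinearEquiv.coe_coe, LinearMap.inr_apply]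
    rw [he]
    simp only [LinearMap.comp_apply, LinearMap.sub_apply, hp]
    rw [← hs, hp]
    simp
  · intro i v
    apply hinj
    rw [hg']
    simp [hp]

lemma thick_kernel {C : QRep k Q → Prop} (hC : Thick C) {A B K : QRep k Q} (hA : C A) (hB : C B) {f : Fam A B} (hf : HomL A B f)
    {s : Fam K A} (hs : HomL K A s) (hinj : ∀ i, Function.Injective (s i))
    (hr : ∀ i v, f i v = 0 ↔ ∃ u, s i u = v) : C K := by
  obtain ⟨I, j, hj, hjinj, hjr⟩ := exists_sub B (fun i => LinearMap.range (f i)) (by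
    rintro x _ ⟨u, rfl⟩
    exact ⟨A.mp x u, hf x u⟩)
  have hI : C I := thick_image hC hA hB hf hj hjinj (fun i v => by
    rw [← hjr]; rfl)
  obtain ⟨g, hg, hg'⟩ := exists_factor hj hjinj hf (fun i v => (hjr i _).1 ⟨v, rfl⟩)
  refine (isSES_of hC hs hg hinj ?_ ?_).2.2 hA hI
  · intro i v
    obtain ⟨u, hu⟩ := (hjr i (j i v)).2 ⟨v, rfl⟩
    exact ⟨u, hjinj i (by rw [hg', hu])⟩
  · intro i v
    rw [← hr, ← hg', map_eq_zero_iff _ (hjinj i)]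

end thick

/-- indecomposable summand detecting a nonzero map -/
lemma exists_indec_summand {N : QRep k Q} : ∀ (n : ℕ) (K : QRep k Q), tdim K ≤ n →
    ∀ ι : Fam N K, (∃ i v, ι i v ≠ 0) →
    ∃ (L : QRep k Q) (s : Fam L K) (r : Fam K L), IndecL L ∧ HomL L K s ∧ HomL K L r ∧
      (∀ i v, r i (s i v) = v) ∧ ∃ i v, r i (ι i v) ≠ 0 := by
  intro n
  induction n with
  | zero =>
    rintro K hK ι ⟨i, v, hv⟩
    exfalso
    have h0 : K.d i = 0 := by
      have : K.d i ≤ tdim K := Finset.single_le_sum (f := K.d) (fun _ _ => Nat.zero_le _) (Finset.mem_univ i)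
      omega
    apply hv
    funext j
    exact absurd j.2 (by omega)
  | succ n ih =>
    rintro K hK ι ⟨i, v, hv⟩
    by_cases hind : IndecL K
    · exact ⟨K, fun _ => LinearMap.id, fun _ => LinearMap.id, hind, fun _ _ => rfl, fun _ _ => rfl,
        fun _ _ => rfl, i, v, hv⟩
    have hne : ∃ i, K.d i ≠ 0 := by
      refine ⟨i, fun h0 => hv ?_⟩
      funext j
      exact absurd j.2 (by omega)
    have step : ∀ e : Fam K K, HomL K K e → (∀ i v, e i (e i v) = e i v) →
        (¬ ∀ i v, e i v = v) → (∃ i v, e i (ι i v) ≠ 0) →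
        ∃ (L : QRep k Q) (s : Fam L K) (r : Fam K L), IndecL L ∧ HomL L K s ∧ HomL K L r ∧
          (∀ i v, r i (s i v) = v) ∧ ∃ i v, r i (ι i v) ≠ 0 := by
      intro e he hid hn1 ⟨i', v', hv'⟩
      obtain ⟨K', j, hj, hjinj, hjr⟩ := exists_sub K (fun i => LinearMap.range (e i)) (by
        rintro x _ ⟨u, rfl⟩
        exact ⟨K.mp x u, he x u⟩)
      obtain ⟨p, hp, hp'⟩ := exists_factor hj hjinj he (fun i v => (hjr i _).1 ⟨v, rfl⟩)
      have hpj : ∀ i v, p i (j i v) = v := by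
        intro i v
        apply hjinj
        rw [hp']
        obtain ⟨u, hu⟩ := (hjr i (j i v)).2 ⟨v, rfl⟩
        rw [← hu, hid]
      have hlt : tdim K' < tdim K := by
        have hle : ∀ i, K'.d i ≤ K.d i := fun i => by
          simpa using LinearMap.finrank_le_finrank_of_injective (hjinj i)
        refine lt_of_le_of_ne (Finset.sum_le_sum fun i _ => hle i) fun heq => hn1 ?_
        have heq' := (Finset.sum_eq_sum_iff_of_le (fun i _ => hle i)).1 heq
        intro i v
        have hsurj : Function.Surjective (j i) :=
          (LinearMap.injective_iff_surjective_of_finrank_eq_finrank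
            (by simpa using heq' i (Finset.mem_univ i))).1 (hjinj i)
        obtain ⟨u, rfl⟩ := hsurj v
        rw [← hp', hpj]
      obtain ⟨L, s, r, hL, hs, hr, hrs, i₂, v₂, h₂⟩ := ih K' (by omega) (fun i => p i ∘ₗ ι i)
        ⟨i', v', fun h => hv' (by
          have := congrArg (j i') h
          simpa [hp'] using this)⟩
      refine ⟨L, fun i => j i ∘ₗ s i, fun i => r i ∘ₗ p i, hL, ?_, ?_, ?_, i₂, v₂, h₂⟩
      · intro x v
        simp only [LinearMap.comp_apply]
        rw [hs, hj]
      · intro x v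
        simp only [LinearMap.comp_apply]
        rw [hp, hr]
      · intro i v
        simp [hpj, hrs]
    unfold IndecL at hind
    push Not at hind
    obtain ⟨e, he, hid, ⟨i0, v0, hv0⟩, ⟨i1, v1, hv1⟩⟩ := hind hne
    by_cases hcase : ∃ i v, e i (ι i v) ≠ 0
    · exact step e he hid (fun h => hv1 (h _ _)) hcase
    · push Not at hcase
      refine step (fun i => LinearMap.id - e i) ?_ ?_ ?_ ⟨i, v, ?_⟩
      · intro x v
        simp [he x v]
      · intro i v
        simp [hid]
      · intro h
        apply hv0
        simpa using h i0 v0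
      · simpa [hcase] using hv

/-- total rank of an endomorphism -/
noncomputable def trk {M N : QRep k Q} (f : Fam M N) : ℕ :=
  ∑ i, Module.finrank k (LinearMap.range (f i))

lemma trk_comp_le {M N P : QRep k Q} (f : Fam M N) (g : Fam N P) (i) :
    Module.finrank k (LinearMap.range (g i ∘ₗ f i)) ≤ Module.finrank k (LinearMap.range (f i)) := by
  rw [LinearMap.range_comp]
  exact Submodule.finrank_map_le _ _

lemma ker_of_trk {M N P : QRep k Q} (f : Fam M N) (g : Fam N P)
    (h : trk f ≤ trk (fun i => g i ∘ₗ f i)) (i) (v) (hv : g i (f i v) = 0) : f i v = 0 := by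
  have h1 := (Finset.sum_eq_sum_iff_of_le (fun i _ => trk_comp_le f g i)).1
    (le_antisymm (Finset.sum_le_sum fun i _ => trk_comp_le f g i) h) i (Finset.mem_univ i)
  have h2 := LinearMap.finrank_range_add_finrank_ker (f i)
  have h3 := LinearMap.finrank_range_add_finrank_ker (g i ∘ₗ f i)
  have h4 : LinearMap.ker (f i) = LinearMap.ker (g i ∘ₗ f i) :=
    Submodule.eq_of_le_of_finrank_eq (LinearMap.ker_le_ker_comp _ _) (by omega)
  have : v ∈ LinearMap.ker (g i ∘ₗ f i) := hv
  rw [← h4] at this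
  exact this

/-- Fitting: in an indecomposable, a nonzero noninjective `f` has `f ∘ f` of smaller rank. -/
lemma fitting {M : QRep k Q} (hM : IndecL M) {f : Fam M M} (hf : HomL M M f)
    (h0 : ∃ i v, f i v ≠ 0) (h1 : ∃ i v, v ≠ 0 ∧ f i v = 0)
    (h : trk f ≤ trk (fun i => f i ∘ₗ f i)) : False := by
  have hker := ker_of_trk f f h
  have hc : ∀ i, IsCompl (LinearMap.range (f i)) (LinearMap.ker (f i)) := by
    intro i
    have hd : Disjoint (LinearMap.range (f i)) (LinearMap.ker (f i)) := by
      rw [Submodule.disjoint_def]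
      rintro _ ⟨u, rfl⟩ hu
      exact hker i u hu
    refine ⟨hd, ?_⟩
    rw [codisjoint_iff]
    apply Submodule.eq_top_of_finrank_eq
    have h2 := LinearMap.finrank_range_add_finrank_ker (f i)
    have h3 := Submodule.finrank_sup_add_finrank_inf_eq (LinearMap.range (f i)) (LinearMap.ker (f i))
    rw [hd.eq_bot] at h3
    simp only [finrank_bot] at h3
    omega
  have hex : ∀ i v, ∃ u w, v = f i u + w ∧ f i w = 0 := by
    intro i v
    have : v ∈ LinearMap.range (f i) ⊔ LinearMap.ker (f i) := by rw [(hc i).sup_eq_top]; trivial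
    obtain ⟨_, ⟨u, rfl⟩, w, hw, h⟩ := Submodule.mem_sup.1 this
    exact ⟨u, w, h.symm, hw⟩
  choose τ hτ using fun i => exists_ginv (f i ∘ₗ f i)
  have hp1 : ∀ i u, f i (τ i (f i (f i u))) = f i u := by
    intro i u
    have := hτ i u
    simp only [LinearMap.comp_apply] at this
    have h2 := hker i (τ i (f i (f i u)) - u) (by simp [this])
    simpa [sub_eq_zero] using h2
  let p : Fam M M := fun i => f i ∘ₗ τ i ∘ₗ f i
  have hpr : ∀ i u w, f i w = 0 → p i (f i u + w) = f i u := by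
    intro i u w hw
    simp [p, hw, hp1]
  rcases hM.2 p (by
      intro x v
      obtain ⟨u, w, rfl, hw⟩ := hex _ v
      rw [hpr _ _ _ hw, map_add, ← hf, hpr _ _ _ (by rw [hf, hw, map_zero])]) (by
      intro i v
      obtain ⟨u, w, rfl, hw⟩ := hex _ v
      rw [hpr _ _ _ hw]
      simpa using hpr i u 0 (map_zero _)) with h | h
  · obtain ⟨i, v, hv⟩ := h0
    apply hv
    rw [← hp1]
    exact h i (f i v)
  · obtain ⟨i, v, hv, hv'⟩ := h1
    apply hv
    rw [← h i v]
    simp [p, hv']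

/-- A minimal indecomposable with self-extensions is a brick. -/
lemma brick_of_minimal {C : QRep k Q → Prop} (hC : Thick C) {X : QRep k Q} (hX : C X)
    (hXi : IndecL X)
    (hmin : ∀ Y, C Y → IndecL Y → SelfExt Y → tdim X ≤ tdim Y)
    (f : Fam X X) (hf : HomL X X f) (hn : ∃ i v, v ≠ 0 ∧ f i v = 0) : ∀ i v, f i v = 0 := by
  classical
  by_contra h0
  push Not at h0
  -- choose `f` of minimal rank
  let S : ℕ → Prop := fun n => ∃ f : Fam X X, HomL X X f ∧ (∃ i v, v ≠ 0 ∧ f i v = 0) ∧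
    (∃ i v, f i v ≠ 0) ∧ trk f = n
  have hS : ∃ n, S n := ⟨_, f, hf, hn, h0, rfl⟩
  obtain ⟨f, hf, hn, h0, hfr⟩ := Nat.find_spec hS
  have hfmin : ∀ g : Fam X X, HomL X X g → (∃ i v, v ≠ 0 ∧ g i v = 0) → (∃ i v, g i v ≠ 0) →
      trk f ≤ trk g := by
    intro g hg h1 h2
    rw [hfr]
    exact Nat.find_min' hS ⟨g, hg, h1, h2, rfl⟩
  -- `f² = 0`
  have hff : ∀ i v, f i (f i v) = 0 := by
    by_contra hne
    push Not at hne
    refine fitting hXi hf h0 hn (hfmin (fun i => f i ∘ₗ f i) ?_ ?_ hne)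
    · intro x v
      simp only [LinearMap.comp_apply]
      rw [hf, hf]
    · obtain ⟨i, v, hv, hv'⟩ := hn
      exact ⟨i, v, hv, by simp [hv']⟩
  obtain ⟨K, j, hj, hjinj, hjr⟩ := exists_sub X (fun i => LinearMap.ker (f i)) (by
    intro x v hv
    rw [LinearMap.mem_ker] at *
    rw [hf, hv, map_zero])
  simp only [LinearMap.mem_ker] at hjr
  have hK : C K := thick_kernel hC hX hX hf hj hjinj hjr
  obtain ⟨ι, hι, hι'⟩ := exists_factor hj hjinj hf (fun i v => (hjr i _).1 (hff i v))
  have hι0 : ∃ i v, ι i v ≠ 0 := by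
    obtain ⟨i, v, hv⟩ := h0
    exact ⟨i, v, fun h => hv (by rw [← hι', h, map_zero])⟩
  obtain ⟨L, s, r, hL, hs, hr, hrs, hri⟩ := exists_indec_summand _ K le_rfl ι hι0
  have hLC : C L := thick_summand hC hs hr hrs hK
  -- `r ∘ ι` is injective modulo `ker f`
  have hinj : ∀ i v, r i (ι i v) = 0 → f i v = 0 := by
    have := ker_of_trk f (fun i => j i ∘ₗ s i ∘ₗ r i ∘ₗ Classical.choose (exists_ginv (j i))) ?_
    · intro i v hv
      apply this i v
      have h2 : Classical.choose (exists_ginv (j i)) (f i v) = ι i v := by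
        apply hjinj
        rw [← hι']
        exact Classical.choose_spec (exists_ginv (j i)) _
      simp [h2, hv]
    · have heq : ∀ i, (j i ∘ₗ s i ∘ₗ r i ∘ₗ Classical.choose (exists_ginv (j i))) ∘ₗ f i =
          j i ∘ₗ s i ∘ₗ r i ∘ₗ ι i := by
        intro i
        refine LinearMap.ext fun v => ?_
        have h2 : Classical.choose (exists_ginv (j i)) (f i v) = ι i v := by
          apply hjinj
          rw [← hι']
          exact Classical.choose_spec (exists_ginv (j i)) _
        simp [h2]
      simp only [heq]
      refine hfmin _ ?_ ?_ ?_
      · intro x v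
        simp only [LinearMap.comp_apply]
        rw [hι, hr, hs, hj]
      · obtain ⟨i, v, hv, hv'⟩ := hn
        refine ⟨i, v, hv, ?_⟩
        have : ι i v = 0 := hjinj i (by rw [hι', hv', map_zero])
        simp [this]
      · obtain ⟨i, v, hv⟩ := hri
        refine ⟨i, v, fun h => hv ?_⟩
        have h2 : s i (r i (ι i v)) = 0 := hjinj i (by simpa using h)
        rw [← hrs i (r i (ι i v)), h2, map_zero]
  -- dimension of `L`
  have hlt : tdim L < tdim X := by
    have hle : ∀ i, L.d i ≤ X.d i := fun i => by
      simpa using LinearMap.finrank_le_finrank_of_injective (f := j i ∘ₗ s i)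
        ((hjinj i).comp (Function.LeftInverse.injective (hrs i)))
    obtain ⟨i, v, hv⟩ := h0
    refine Finset.sum_lt_sum (fun i _ => hle i) ⟨i, Finset.mem_univ i, ?_⟩
    refine lt_of_le_of_ne (hle i) fun heq => hv ?_
    have hsurj : Function.Surjective (j i ∘ₗ s i) :=
      (LinearMap.injective_iff_surjective_of_finrank_eq_finrank
        (by simpa using heq)).1 ((hjinj i).comp (Function.LeftInverse.injective (hrs i)))
    obtain ⟨u, rfl⟩ := hsurj v
    exact (hjr i _).2 ⟨s i u, rfl⟩
  have hns : ¬ SelfExt L := fun h => absurd (hmin L hLC hL h) (by omega)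
  choose τ hτ using fun i => exists_ginv (f i)
  choose t ht using fun i => exists_ginv (j i)
  choose ρ hρ using fun i => exists_ginv (r i ∘ₗ ι i)
  have hjt : ∀ i v, f i v = 0 → j i (t i v) = v := by
    intro i v hv
    obtain ⟨u, rfl⟩ := (hjr i v).1 hv
    rw [ht]
  -- the cocycle on X
  let c : ∀ x, X.V (Q.src x) →ₗ[k] L.V (Q.tgt x) := fun x =>
    r _ ∘ₗ t _ ∘ₗ (X.mp x ∘ₗ τ _ ∘ₗ f _ - τ _ ∘ₗ f _ ∘ₗ X.mp x)
  have hcz : ∀ x v, f _ v = 0 → c x v = 0 := by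
    intro x v hv
    have h2 : f _ (X.mp x v) = 0 := by rw [hf, hv, map_zero]
    simp [c, hv, h2]
  have hcf : ∀ x v, c x (ρ _ (r _ (ι _ v))) = c x v := by
    intro x v
    rw [← sub_eq_zero, ← map_sub]
    apply hcz
    apply hinj
    have := hρ _ v
    simp only [LinearMap.comp_apply] at this
    rw [map_sub, map_sub, this, sub_self]
  unfold SelfExt at hns
  push Not at hns
  obtain ⟨φ, hφ⟩ := hns (fun x => c x ∘ₗ ρ _)
  simp only [LinearMap.comp_apply] at hφ
  -- the retraction
  let R : Fam X L := fun i => r i ∘ₗ t i ∘ₗ (LinearMap.id - τ i ∘ₗ f i) - φ i ∘ₗ r i ∘ₗ ι i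
  have hcommL : ∀ x v, f _ v = 0 → r _ (t _ (X.mp x v)) = L.mp x (r _ (t _ v)) := by
    intro x v hv
    obtain ⟨u, rfl⟩ := (hjr _ v).1 hv
    have h1 : ∀ i u, t i (j i u) = u := fun i u => hjinj i (ht i u)
    rw [← hj, h1, h1, hr]
  have hR : HomL X L R := by
    intro x v
    have h1 := hφ x (r _ (ι _ v))
    rw [hcf] at h1
    have h2 := hcommL x (v - τ _ (f _ v)) (by rw [map_sub, hτ, sub_self])
    simp only [R, c, LinearMap.sub_apply, LinearMap.comp_apply, LinearMap.id_apply, map_sub] at h1 h2 ⊢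
    rw [hι, hr]
    linear_combination (exp := 1) h1 + h2
  have hRs : ∀ i v, R i (j i (s i v)) = v := by
    intro i v
    have h1 : f i (j i (s i v)) = 0 := (hjr i _).2 ⟨_, rfl⟩
    have h2 : ι i (j i (s i v)) = 0 := hjinj i (by rw [hι', h1, map_zero])
    have h3 : t i (j i (s i v)) = s i v := hjinj i (ht i _)
    simp [R, h1, h2, h3, hrs]
  rcases hXi.2 (fun i => j i ∘ₗ s i ∘ₗ R i) (by
      intro x v
      simp only [LinearMap.comp_apply]
      rw [hR, hs, hj]) (by
      intro i v
      simp [hRs]) with h | h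
  · obtain ⟨i, hi⟩ := hL.1
    have : ∀ v : L.V i, v = 0 := by
      intro v
      have h1 := h i (j i (s i v))
      simp only [LinearMap.comp_apply, hRs] at h1
      rw [← hRs i v, h1, map_zero]
    have h2 := congrFun (this (fun _ => 1)) ⟨0, Nat.pos_of_ne_zero hi⟩
    simp at h2
  · obtain ⟨i, v, hv⟩ := h0
    apply hv
    rw [← h i v]
    exact (hjr i _).2 ⟨_, rfl⟩

lemma scalar_of_brick [IsAlgClosed k] {X : QRep k Q} (hX : ∃ i, X.d i ≠ 0)
    (hb : ∀ f : Fam X X, HomL X X f → (∃ i v, v ≠ 0 ∧ f i v = 0) → ∀ i v, f i v = 0)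
    (f : Fam X X) (hf : HomL X X f) : ∃ c : k, ∀ i v, f i v = c • v := by
  obtain ⟨i, hi⟩ := hX
  have : Nonempty (Fin (X.d i)) := ⟨⟨0, Nat.pos_of_ne_zero hi⟩⟩
  obtain ⟨c, hc⟩ := Module.End.exists_eigenvalue (K := k) (V := X.V i) (f i)
  obtain ⟨v, hv⟩ := hc.exists_hasEigenvector
  refine ⟨c, fun i' v' => ?_⟩
  have := hb (fun i => f i - c • LinearMap.id) (by
    intro x v
    simp [hf x v]) ⟨i, v, hv.2, by simp [hv.apply_eq_smul]⟩ i' v'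
  simpa [sub_eq_zero] using this

/-- the shift on `Fin n → A`. -/
def shift (n : ℕ) (A : Type) [AddCommGroup A] [Module k A] : (Fin n → A) →ₗ[k] (Fin n → A) where
  toFun v := fun a => if h : a.1 + 1 < n then v ⟨a.1 + 1, h⟩ else 0
  map_add' v w := by
    funext a
    by_cases h : a.1 + 1 < n <;> simp [h]
  map_smul' c v := by
    funext a
    by_cases h : a.1 + 1 < n <;> simp [h]

lemma shift_single_zero (n : ℕ) (A : Type) [AddCommGroup A] [Module k A] (v : A) :
    shift (k := k) (n + 1) A (Pi.single 0 v) = 0 := by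
  funext a
  by_cases h : a.1 + 1 < n + 1
  · have h2 : (⟨a.1 + 1, h⟩ : Fin (n + 1)) ≠ 0 := by
      intro h3
      have := congrArg Fin.val h3
      simp at this
    simp only [shift, LinearMap.coe_mk, AddHom.coe_mk, h, dif_pos, Pi.zero_apply]
    exact Pi.single_eq_of_ne h2 v
  · simp only [shift, LinearMap.coe_mk, AddHom.coe_mk, h, dif_neg, Pi.zero_apply, not_false_eq_true]

lemma shift_single_succ (n : ℕ) (A : Type) [AddCommGroup A] [Module k A] (b : ℕ)
    (hb : b + 1 < n + 1) (v : A) :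
    shift (k := k) (n + 1) A (Pi.single ⟨b + 1, hb⟩ v) = Pi.single ⟨b, by omega⟩ v := by
  funext a
  by_cases h : a.1 + 1 < n + 1
  · simp only [shift, LinearMap.coe_mk, AddHom.coe_mk, h, dif_pos]
    by_cases hab : a.1 = b
    · subst hab
      rw [Pi.single_eq_same, Pi.single_eq_same]
    · rw [Pi.single_eq_of_ne, Pi.single_eq_of_ne]
      · intro h3; exact hab (congrArg Fin.val h3)
      · intro h3
        have := congrArg Fin.val h3
        simp only at this
        omega
  · simp only [shift, LinearMap.coe_mk, AddHom.coe_mk, h, dif_neg, not_false_eq_true]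
    rw [Pi.single_eq_of_ne]
    intro h3
    have := congrArg Fin.val h3
    simp only at this
    omega

lemma map_single_apply {n : ℕ} {A B : Type} [AddCommGroup A] [Module k A] [AddCommGroup B]
    [Module k B] (L : A →ₗ[k] B) (b : Fin n) (v : A) (a : Fin n) :
    L ((Pi.single b v : Fin n → A) a) = (Pi.single b (L v) : Fin n → B) a := by
  by_cases h : a = b
  · subst h; rw [Pi.single_eq_same, Pi.single_eq_same]
  · rw [Pi.single_eq_of_ne h, Pi.single_eq_of_ne h, map_zero]

/-- `W` is (a model of) the `n`-fold iterated self extension of `X` by `γ`. -/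
def IsTower (X : QRep k Q) (γ : ∀ x, X.V (Q.src x) →ₗ[k] X.V (Q.tgt x)) (n : ℕ) (W : QRep k Q)
    (e : ∀ i, (Fin n → X.V i) ≃ₗ[k] W.V i) : Prop :=
  ∀ x v, W.mp x (e _ v) = e _ (fun a => X.mp x (v a) + γ x (shift (k := k) n _ v a))

lemma exists_tower (X : QRep k Q) (γ : ∀ x, X.V (Q.src x) →ₗ[k] X.V (Q.tgt x)) (n : ℕ) :
    ∃ W e, IsTower X γ n W e := by
  obtain ⟨W, e, he⟩ := realize (k := k) (Q := Q) (fun i => Fin n → X.V i)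
    (fun x => LinearMap.pi fun a => X.mp x ∘ₗ LinearMap.proj a +
      γ x ∘ₗ LinearMap.proj a ∘ₗ shift n _)
  exact ⟨W, e, fun x v => by rw [he]; rfl⟩

lemma tower_mem {C : QRep k Q → Prop} (hC : Thick C) {X : QRep k Q} (hX : C X)
    (γ : ∀ x, X.V (Q.src x) →ₗ[k] X.V (Q.tgt x)) (n : ℕ) :
    ∀ W e, IsTower X γ (n + 1) W e → C W := by
  induction n with
  | zero =>
    intro W e he
    refine thick_summand hC (L := W) (M := X)
      (s := fun i => LinearMap.proj 0 ∘ₗ (e i).symm.toLinearMap)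
      (r := fun i => (e i).toLinearMap ∘ₗ LinearMap.single k (fun _ => X.V i) 0) ?_ ?_ ?_ hX
    · intro x v
      obtain ⟨u, rfl⟩ := (e _).surjective v
      rw [he]
      simp [shift]
    · intro x v
      simp only [LinearMap.comp_apply, LinearEquiv.coe_coe]
      rw [he]
      congr 1
      funext a
      obtain rfl : a = 0 := Fin.ext (by omega)
      simp [shift]
    · intro i v
      obtain ⟨u, rfl⟩ := (e _).surjective v
      simp only [LinearMap.comp_apply, LinearEquiv.coe_coe]
      congr 1
      funext a
      obtain rfl : a = 0 := Fin.ext (by omega)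
      simp
  | succ n ih =>
    intro W e he
    obtain ⟨W', e', he'⟩ := exists_tower X γ (n + 1)
    have hW' := ih W' e' he'
    refine (isSES_of hC (A := X) (B := W) (D := W')
      (f := fun i => (e i).toLinearMap ∘ₗ LinearMap.single k (fun _ => X.V i) 0)
      (g := fun i => (e' i).toLinearMap ∘ₗ LinearMap.funLeft k (X.V i) Fin.succ ∘ₗ
        (e i).symm.toLinearMap) ?_ ?_ ?_ ?_ ?_).2.1 hX hW'
    · intro x v
      simp only [LinearMap.comp_apply, LinearEquiv.coe_coe]
      rw [he]
      congr 1
      funext a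
      simp only [LinearMap.coe_single]
      rw [shift_single_zero, map_single_apply]
      simp
    · intro x v
      obtain ⟨u, rfl⟩ := (e _).surjective v
      rw [he]
      simp only [LinearMap.comp_apply, LinearEquiv.coe_coe, LinearEquiv.symm_apply_apply]
      rw [he']
      congr 1
      funext a
      simp [shift, LinearMap.funLeft]
    · intro i
      exact (e i).injective.comp (Pi.single_injective (M := fun _ : Fin (n + 2) => X.V i) 0)
    · intro i w
      obtain ⟨u, rfl⟩ := (e' _).surjective w
      refine ⟨e i (Fin.cons 0 u), ?_⟩
      simp only [LinearMap.comp_apply, LinearEquiv.coe_coe, LinearEquiv.symm_apply_apply]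
      congr 1
    · intro i v
      obtain ⟨u, rfl⟩ := (e _).surjective v
      simp only [LinearMap.comp_apply, LinearEquiv.coe_coe, LinearEquiv.symm_apply_apply,
        EmbeddingLike.map_eq_zero_iff, EmbeddingLike.apply_eq_iff_eq]
      constructor
      · intro h
        refine ⟨u 0, ?_⟩
        funext a
        refine Fin.cases ?_ (fun a => ?_) a
        · simp
        · have := congrFun h a
          simp only [LinearMap.funLeft_apply, Pi.zero_apply] at this
          simp [this]
      · rintro ⟨w, rfl⟩
        funext a
        simp [LinearMap.funLeft]

/-- strictly upper triangular idempotents vanish -/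
lemma idem_zero {n : ℕ} {A : Type} [AddCommGroup A] [Module k A]
    (G : (Fin n → A) →ₗ[k] (Fin n → A)) (hG : ∀ v, G (G v) = G v)
    (hu : ∀ v a, (∀ b, a < b → v b = 0) → G v a = 0) : ∀ v, G v = 0 := by
  have : ∀ j : ℕ, ∀ v, ∀ a : Fin n, n ≤ a.1 + j → G v a = 0 := by
    intro j
    induction j with
    | zero => intro v a h; exact absurd a.2 (by omega)
    | succ j ih =>
      intro v a h
      rw [← hG]
      apply hu
      intro b hb
      apply ih
      have : a.1 < b.1 := hb
      omega
  intro v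
  funext a
  exact this n v a (by omega)

lemma tower_indec {X : QRep k Q} (hX : ∃ i, X.d i ≠ 0)
    (hb : ∀ f : Fam X X, HomL X X f → ∃ c : k, ∀ i v, f i v = c • v)
    {γ : ∀ x, X.V (Q.src x) →ₗ[k] X.V (Q.tgt x)}
    (hγ : ¬ ∃ φ : Fam X X, ∀ x v, γ x v = φ (Q.tgt x) (X.mp x v) - X.mp x (φ (Q.src x) v))
    {n : ℕ} {W : QRep k Q} {e : ∀ i, (Fin (n + 1) → X.V i) ≃ₗ[k] W.V i}
    (he : IsTower X γ (n + 1) W e) : IndecL W := by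
  have hγ0 : ∀ (c : k) (φ : Fam X X),
      (∀ x v, c • γ x v = φ (Q.tgt x) (X.mp x v) - X.mp x (φ (Q.src x) v)) → c = 0 := by
    intro c φ h
    by_contra hc
    apply hγ
    refine ⟨fun i => c⁻¹ • φ i, fun x v => ?_⟩
    simp only [LinearMap.smul_apply, map_smul]
    rw [← smul_sub, ← h, smul_smul, inv_mul_cancel₀ hc, one_smul]
  obtain ⟨i0, hi0⟩ := hX
  have : Nonempty (Fin (X.d i0)) := ⟨⟨0, Nat.pos_of_ne_zero hi0⟩⟩
  obtain ⟨w0, hw0⟩ := exists_ne (0 : X.V i0)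
  refine ⟨⟨i0, fun h0 => hw0 ?_⟩, ?_⟩
  · have h1 : e i0 (fun _ => w0) = 0 := by
      funext j
      exact absurd j.2 (by omega)
    have h2 := congrFun ((map_eq_zero_iff _ (e i0).injective).1 h1) 0
    exact h2
  intro f hf hid
  -- conjugate
  let g : ∀ i, (Fin (n + 1) → X.V i) →ₗ[k] (Fin (n + 1) → X.V i) :=
    fun i => (e i).symm.toLinearMap ∘ₗ f i ∘ₗ (e i).toLinearMap
  have hg : ∀ i v, e i (g i v) = f i (e i v) := by intro i v; simp [g]
  have hgid : ∀ i v, g i (g i v) = g i v := by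
    intro i v
    apply (e i).injective
    rw [hg, hg, hid]
  have hgh : ∀ x v a, g _ (fun a => X.mp x (v a) + γ x (shift (k := k) (n + 1) _ v a)) a =
      X.mp x (g _ v a) + γ x (shift (k := k) (n + 1) _ (g _ v) a) := by
    intro x v a
    have h1 := hf x (e _ v)
    rw [he, ← hg, ← hg, he] at h1
    exact congrFun ((e _).injective h1) a
  -- components
  let F : ℕ → ℕ → Fam X X := fun a b i =>
    if h : a < n + 1 ∧ b < n + 1 then
      LinearMap.proj ⟨a, h.1⟩ ∘ₗ g i ∘ₗ LinearMap.single k (fun _ => X.V i) ⟨b, h.2⟩ else 0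
  have hFdef : ∀ (a b : Fin (n + 1)) i v, F a b i v = g i (Pi.single b v) a := by
    intro a b i v
    have h : a.1 < n + 1 ∧ b.1 < n + 1 := ⟨a.2, b.2⟩
    simp only [F, h, and_self, dif_pos]
    rfl
  have hFout : ∀ a b i v, n + 1 ≤ a → F a b i v = 0 := by
    intro a b i v h
    have : ¬ (a < n + 1 ∧ b < n + 1) := by omega
    simp only [F, this, dif_neg, not_false_eq_true]
    rfl
  have hshift : ∀ (a b : Fin (n + 1)) i v,
      shift (k := k) (n + 1) _ (g i (Pi.single b v)) a = F (a + 1) b i v := by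
    intro a b i v
    by_cases h : a.1 + 1 < n + 1
    · have := hFdef ⟨a + 1, h⟩ b i v
      simp only at this
      rw [this]
      simp only [shift, LinearMap.coe_mk, AddHom.coe_mk, h, dif_pos]
    · rw [hFout _ _ _ _ (by omega)]
      simp only [shift, LinearMap.coe_mk, AddHom.coe_mk, h, dif_neg, not_false_eq_true]
  have hE0 : ∀ a, a < n + 1 → ∀ x v,
      F a 0 _ (X.mp x v) = X.mp x (F a 0 _ v) + γ x (F (a + 1) 0 _ v) := by
    intro a ha x v
    have h1 := hgh x (Pi.single 0 v) ⟨a, ha⟩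
    rw [hshift] at h1
    have h2 : (fun a => X.mp x ((Pi.single 0 v : Fin (n + 1) → _) a) +
        γ x (shift (k := k) (n + 1) _ (Pi.single 0 v) a)) =
        (Pi.single 0 (X.mp x v) : Fin (n + 1) → _) := by
      funext b
      rw [shift_single_zero, map_single_apply]
      simp
    rw [h2] at h1
    have h3 := hFdef ⟨a, ha⟩ 0
    simp only [Fin.val_zero] at h3
    rw [h3, h3]
    exact h1
  have hE1 : ∀ a b, a < n + 1 → b + 1 < n + 1 → ∀ x v,
      F a (b + 1) _ (X.mp x v) + F a b _ (γ x v) =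
        X.mp x (F a (b + 1) _ v) + γ x (F (a + 1) (b + 1) _ v) := by
    intro a b ha hb x v
    have h1 := hgh x (Pi.single ⟨b + 1, hb⟩ v) ⟨a, ha⟩
    rw [hshift] at h1
    have h2 : (fun a => X.mp x ((Pi.single ⟨b + 1, hb⟩ v : Fin (n + 1) → _) a) +
        γ x (shift (k := k) (n + 1) _ (Pi.single ⟨b + 1, hb⟩ v) a)) =
        (Pi.single ⟨b + 1, hb⟩ (X.mp x v) : Fin (n + 1) → _) +
          (Pi.single ⟨b, by omega⟩ (γ x v) : Fin (n + 1) → _) := by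
      funext a
      rw [shift_single_succ, map_single_apply, map_single_apply]
      rfl
    rw [h2, map_add] at h1
    have h3 := hFdef ⟨a, ha⟩ ⟨b + 1, hb⟩
    have h4 := hFdef ⟨a, ha⟩ ⟨b, by omega⟩
    simp only at h3 h4
    rw [h3, h4, h3]
    exact h1
  -- strictly lower components vanish
  have hlow : ∀ m j, 1 ≤ j → n + 1 ≤ j + m → ∀ b i v, F (b + j) b i v = 0 := by
    intro m
    induction m with
    | zero =>
      intro j _ h b i v
      exact hFout _ _ _ _ (by omega)
    | succ m ih =>
      intro j hj hm
      have ih' := ih (j + 1) (by omega) (by omega)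
      have hhom : ∀ b, b + j < n + 1 → HomL X X (F (b + j) b) := by
        intro b hbj x v
        cases b with
        | zero =>
          have := hE0 (0 + j) hbj x v
          have h2 := ih' 0 (Q.src x) v
          rw [← add_assoc] at h2
          rw [h2, map_zero, add_zero] at this
          exact this
        | succ b =>
          have := hE1 (b + 1 + j) b hbj (by omega) x v
          have h2 := ih' (b + 1) (Q.src x) v
          have h3 := ih' b (Q.tgt x) (γ x v)
          rw [← add_assoc] at h2
          rw [show b + (j + 1) = b + 1 + j by omega] at h3
          rw [h2, h3, map_zero, add_zero, add_zero] at this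
          exact this
      have hdesc : ∀ p b, n + 1 ≤ b + j + p → ∀ i v, F (b + j) b i v = 0 := by
        intro p
        induction p with
        | zero =>
          intro b h i v
          exact hFout _ _ _ _ (by omega)
        | succ p ihp =>
          intro b h i v
          by_cases hbj : b + j < n + 1
          · obtain ⟨c, hc⟩ := hb _ (hhom b hbj)
            have : c = 0 := by
              apply hγ0 c (fun i => - F (b + j) (b + 1) i)
              intro x v
              have h1 := hE1 (b + j) b hbj (by omega) x v
              have h2 := ihp (b + 1) (by omega) (Q.src x) v
              rw [show b + 1 + j = b + j + 1 by omega] at h2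
              rw [h2, hc, map_zero, add_zero] at h1
              simp only [LinearMap.neg_apply, map_neg]
              linear_combination (exp := 1) h1
            rw [hc, this, zero_smul]
          · exact hFout _ _ _ _ (by omega)
      intro b i v
      exact hdesc (n + 1) b (by omega) i v
  have hlow' : ∀ a b, b < a → ∀ i v, F a b i v = 0 := by
    intro a b h i v
    have := hlow (n + 1) (a - b) (by omega) (by omega) b i v
    rwa [show b + (a - b) = a by omega] at this
  have hdiag : ∀ a, a < n + 1 → HomL X X (F a a) := by
    intro a ha x v
    cases a with
    | zero =>
      have h1 := hE0 0 ha x v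
      rw [hlow' (0 + 1) 0 (by omega), map_zero, add_zero] at h1
      exact h1
    | succ a =>
      have h1 := hE1 (a + 1) a ha ha x v
      rw [hlow' (a + 1 + 1) (a + 1) (by omega), hlow' (a + 1) a (by omega), map_zero, add_zero,
        add_zero] at h1
      exact h1
  obtain ⟨c, hc⟩ := hb _ (hdiag 0 (by omega))
  have hdc : ∀ a, a < n + 1 → ∀ i v, F a a i v = c • v := by
    intro a
    induction a with
    | zero => intro _; exact hc
    | succ a ih =>
      intro ha
      have ih := ih (by omega)
      obtain ⟨c', hc'⟩ := hb _ (hdiag (a + 1) ha)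
      have : c - c' = 0 := by
        apply hγ0 (c - c') (fun i => - F a (a + 1) i)
        intro x v
        have h1 := hE1 a a (by omega) ha x v
        rw [hc', ih, map_smul] at h1
        simp only [LinearMap.neg_apply, map_neg, sub_smul]
        linear_combination (exp := 1) h1
      intro i v
      rw [hc', sub_eq_zero.1 this]
  have hgsum : ∀ i v a, g i v a = ∑ b : Fin (n + 1), F a b i (v b) := by
    intro i v a
    simp only [hFdef]
    rw [← Finset.sum_apply, ← map_sum, Finset.univ_sum_single]
  -- `g - c` is strictly upper triangular
  have hup : ∀ i v a, (∀ b, a < b → v b = 0) → g i v a = c • v a := by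
    intro i v a h
    rw [hgsum, Finset.sum_eq_single a, hdc a a.2]
    · intro b _ hba
      rcases lt_or_gt_of_ne hba with h1 | h1
      · exact hlow' _ _ h1 _ _
      · rw [h b h1, map_zero]
    · simp
  have hc2 : c * c = c := by
    have h0 : g i0 (Pi.single 0 w0) = c • (Pi.single 0 w0 : Fin (n + 1) → X.V i0) := by
      funext a
      rw [hgsum, Finset.sum_eq_single 0]
      · by_cases ha : a = 0
        · subst ha
          rw [hdc _ (0 : Fin (n + 1)).2]
          rfl
        · have : ((0 : Fin (n + 1)) : ℕ) < a := Nat.pos_of_ne_zero (fun h => ha (Fin.ext h))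
          rw [hlow' _ _ this]
          simp [ha]
      · intro b _ hb
        simp [hb]
      · simp
    have h1 := hgid i0 (Pi.single 0 w0)
    rw [h0, map_smul, h0, smul_smul] at h1
    have h2 := congrFun h1 0
    simp only [Pi.smul_apply, Pi.single_eq_same] at h2
    exact smul_left_injective k hw0 h2
  rcases (by
    have h5 : c * (c - 1) = 0 := by rw [mul_sub, hc2]; simp
    rcases mul_eq_zero.1 h5 with h | h
    · exact Or.inl h
    · exact Or.inr (sub_eq_zero.1 h) : c = 0 ∨ c = 1) with h | h
  · left
    intro i v
    obtain ⟨u, rfl⟩ := (e i).surjective v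
    rw [← hg, idem_zero (g i) (hgid i) (fun v a hv => by rw [hup i v a hv, h, zero_smul]), map_zero]
  · right
    intro i v
    obtain ⟨u, rfl⟩ := (e i).surjective v
    have h1 := idem_zero (LinearMap.id - g i) (fun v => by simp [hgid]) (fun v a hv => by
      simp [hup i v a hv, h]) u
    simp only [LinearMap.sub_apply, LinearMap.id_apply, sub_eq_zero] at h1
    rw [← hg, ← h1]

lemma dim_eq_of_iso {M N : QRep k Q} (h : IsoRep M N) (i) : M.d i = N.d i := by
  obtain ⟨f, _, hf⟩ := h
  have := (LinearEquiv.ofBijective _ (hf i)).finrank_eq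
  simpa using this

lemma infinite_aux [IsAlgClosed k] {C : QRep k Q → Prop} (hC : Thick C) {X : QRep k Q} (hX : C X)
    (hXi : IndecL X) (hXe : SelfExt X) (l : List (QRep k Q)) :
    ∃ M : QRep k Q, C M ∧ Indec M ∧ ∀ N ∈ l, ¬ IsoRep M N := by
  classical
  have hS : ∃ n, ∃ Y : QRep k Q, C Y ∧ IndecL Y ∧ SelfExt Y ∧ tdim Y = n := ⟨_, X, hX, hXi, hXe, rfl⟩
  obtain ⟨Y, hY, hYi, hYe, hYn⟩ := Nat.find_spec hS
  have hmin : ∀ Z, C Z → IndecL Z → SelfExt Z → tdim Y ≤ tdim Z := by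
    intro Z h1 h2 h3
    rw [hYn]
    exact Nat.find_min' hS ⟨Z, h1, h2, h3, rfl⟩
  have hb := scalar_of_brick hYi.1 (brick_of_minimal hC hY hYi hmin)
  obtain ⟨γ, hγ⟩ := hYe
  obtain ⟨i0, hi0⟩ := hYi.1
  obtain ⟨W, e, he⟩ := exists_tower Y γ ((l.map (fun N => N.d i0)).sum + 1)
  refine ⟨W, tower_mem hC hY γ _ W e he, (indecL_iff W).2 (tower_indec hYi.1 hb hγ he), ?_⟩
  intro N hN hiso
  have h1 := dim_eq_of_iso hiso i0
  have h2 := (e i0).finrank_eq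
  rw [Module.finrank_pi_fintype] at h2
  simp only [Module.finrank_fin_fun, Finset.sum_const, Finset.card_univ,
    Fintype.card_fin, smul_eq_mul] at h2
  have h3 : N.d i0 ≤ (l.map (fun N => N.d i0)).sum :=
    List.le_sum_of_mem (List.mem_map.2 ⟨N, hN, rfl⟩)
  have h4 : (l.map (fun N => N.d i0)).sum + 1 ≤ ((l.map (fun N => N.d i0)).sum + 1) * Y.d i0 :=
    Nat.le_mul_of_pos_right _ (Nat.pos_of_ne_zero hi0)
  omega

end Helpers

end QRep

open QRep in
/-- an abelian extension-closed (= thick) subcategory of rep(Q),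
`Q` Euclidean, contained in the regular representations and containing a
non-exceptional indecomposable, contains infinitely many pairwise non-isomorphic
indecomposables. -/
theorem infinitely_many_indecs (k : Type) [Field k] [IsAlgClosed k]
    (Q : FinQuiver) (hQ : Q.IsEuclidean) (δ : Fin Q.n → ℤ) (hδ : Q.IsNullRoot δ)
    (C : QRep k Q → Prop) (hC : Thick C)
    (hreg : ∀ M, C M → RegularRep δ M)
    (X : QRep k Q) (hX : C X) (hXind : Indec X) (hXne : extDim X X ≠ 0) :
    ∀ l : List (QRep k Q), ∃ M : QRep k Q, C M ∧ Indec M ∧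
      ∀ N ∈ l, ¬ IsoRep M N := by
  exact infinite_aux hC hX ((indecL_iff X).1 hXind) (selfExt_of hXne)
end

section
/- Let Q be a Euclidean quiver and C a thick subcategory of rep(Q) that contains at least one indecomposable representation that is preprojective or preinjective. Then C is generated by an exceptional sequence; equivalently, C is equivalent to rep(Q') for some acyclic quiver Q'. -/
open Matrix BigOperators

/-- A representation of `Q` by abstract finite-dimensional spaces. -/
structure LRep (k : Type) [Field k] (Q : FinQuiver) where
  V : Fin Q.n → Type
  acg : ∀ i, AddCommGroup (V i)
  mod : ∀ i, Module k (V i)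
  fin : ∀ i, FiniteDimensional k (V i)
  φ : ∀ x : Fin Q.a, V (Q.src x) →ₗ[k] V (Q.tgt x)

attribute [instance] LRep.acg LRep.mod LRep.fin

namespace LRep

variable {k : Type} [Field k] {Q : FinQuiver}

def IsHom (R S : LRep k Q) (f : ∀ i, R.V i →ₗ[k] S.V i) : Prop :=
  ∀ x v, f (Q.tgt x) (R.φ x v) = S.φ x (f (Q.src x) v)

/-- The map with kernel Hom and cokernel Ext. -/
def D (R S : LRep k Q) : (∀ i, R.V i →ₗ[k] S.V i) →ₗ[k]
    (∀ x : Fin Q.a, R.V (Q.src x) →ₗ[k] S.V (Q.tgt x)) where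
  toFun f := fun x => f (Q.tgt x) ∘ₗ R.φ x - S.φ x ∘ₗ f (Q.src x)
  map_add' := by
    intro f g; funext x; ext v
    simp only [Pi.add_apply, LinearMap.sub_apply, LinearMap.comp_apply, LinearMap.add_apply,
      map_add]
    abel
  map_smul' := by
    intro c f; funext x; ext v
    simp [smul_sub]

theorem D_apply (R S : LRep k Q) (f : ∀ i, R.V i →ₗ[k] S.V i) (x) (v) :
    D R S f x v = f (Q.tgt x) (R.φ x v) - S.φ x (f (Q.src x) v) := rfl

theorem isHom_iff {R S : LRep k Q} {f : ∀ i, R.V i →ₗ[k] S.V i} :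
    IsHom R S f ↔ D R S f = 0 := by
  constructor
  · intro h; funext x; ext v; rw [D_apply, h x v]; simp
  · intro h x v
    have := congrArg (fun F => F x v) h
    simpa [D_apply, sub_eq_zero] using this

noncomputable def hom (R S : LRep k Q) : ℕ := Module.finrank k (LinearMap.ker (D R S))
noncomputable def ext (R S : LRep k Q) : ℕ :=
  Module.finrank k ((∀ x : Fin Q.a, R.V (Q.src x) →ₗ[k] S.V (Q.tgt x)) ⧸ LinearMap.range (D R S))

noncomputable def dim (R : LRep k Q) : Fin Q.n → ℤ := fun i => (Module.finrank k (R.V i) : ℤ)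

theorem hom_eq_zero {R S : LRep k Q} : hom R S = 0 ↔ Function.Injective (D R S) := by
  rw [hom, Submodule.finrank_eq_zero, LinearMap.ker_eq_bot]

theorem ext_eq_zero {R S : LRep k Q} : ext R S = 0 ↔ Function.Surjective (D R S) := by
  rw [ext, Module.finrank_zero_iff, Submodule.Quotient.subsingleton_iff, LinearMap.range_eq_top]

theorem euler_eq (R S : LRep k Q) : Q.euler R.dim S.dim = (hom R S : ℤ) - ext R S := by
  have h1 := LinearMap.finrank_range_add_finrank_ker (D R S)
  have h2 := Submodule.finrank_quotient_add_finrank (LinearMap.range (D R S))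
  rw [Module.finrank_pi_fintype] at h1 h2
  simp only [Module.finrank_linearMap] at h1 h2
  unfold FinQuiver.euler dim hom ext
  have h1' := congrArg (Nat.cast : ℕ → ℤ) h1
  have h2' := congrArg (Nat.cast : ℕ → ℤ) h2
  push_cast at h1' h2'
  rw [← h1', ← h2']; ring

def IsSESL (A B C : LRep k Q) (f : ∀ i, A.V i →ₗ[k] B.V i) (g : ∀ i, B.V i →ₗ[k] C.V i) : Prop :=
  IsHom A B f ∧ IsHom B C g ∧ ∀ i, Function.Injective (f i) ∧ Function.Surjective (g i) ∧
    Function.Exact (f i) (g i)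

structure ThickL (P : LRep k Q → Prop) : Prop where
  summand : ∀ L M f g, IsHom L M f → IsHom M L g → (∀ i v, g i (f i v) = v) → P M → P L
  ses : ∀ A B C f g, IsSESL A B C f g →
    ((P A → P B → P C) ∧ (P A → P C → P B) ∧ (P B → P C → P A))

section perp
variable {A B C : LRep k Q} {f : ∀ i, A.V i →ₗ[k] B.V i} {g : ∀ i, B.V i →ₗ[k] C.V i}

theorem D_comp (E : LRep k Q) (hf : IsHom A B f) (h : ∀ i, E.V i →ₗ[k] A.V i) (x) :
    D E B (fun i => f i ∘ₗ h i) x = f (Q.tgt x) ∘ₗ D E A h x := by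
  ext v
  simp [D_apply, hf x]

theorem lift_exact {U A B C : Type} [AddCommGroup U] [AddCommGroup A] [AddCommGroup B]
    [AddCommGroup C] [Module k U] [Module k A] [Module k B] [Module k C]
    {f : A →ₗ[k] B} {g : B →ₗ[k] C} (he : Function.Exact f g)
    (h : U →ₗ[k] B) (h0 : ∀ u, g (h u) = 0) : ∃ h' : U →ₗ[k] A, f ∘ₗ h' = h := by
  let h1 : U →ₗ[k] LinearMap.range f := h.codRestrict _ (fun u => (he (h u)).1 (h0 u))
  obtain ⟨h', hh⟩ := Module.projective_lifting_property f.rangeRestrict h1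
    f.surjective_rangeRestrict
  refine ⟨h', ?_⟩
  ext u
  have := congrArg (fun F => (F u : B)) hh
  exact this

/-- Ext is right exact. -/
theorem ext_right (E : LRep k Q) (h : IsSESL A B C f g) (hB : Function.Surjective (D E B)) :
    Function.Surjective (D E C) := by
  intro c
  have : ∀ x, ∃ b : E.V (Q.src x) →ₗ[k] B.V (Q.tgt x), g _ ∘ₗ b = c x := fun x =>
    Module.projective_lifting_property _ _ (h.2.2 _).2.1
  choose b hb using this
  obtain ⟨β, rfl⟩ := hB b
  exact ⟨fun i => g i ∘ₗ β i, funext fun x => by rw [D_comp E h.2.1, hb]⟩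

theorem hom_left (E : LRep k Q) (h : IsSESL A B C f g) (hB : Function.Injective (D E B)) :
    Function.Injective (D E A) := by
  rw [injective_iff_map_eq_zero] at hB ⊢
  intro a ha
  have := hB (fun i => f i ∘ₗ a i) (funext fun x => by rw [D_comp E h.1, ha]; simp)
  funext i; ext v
  have h2 := congrArg (fun F => F i v) this
  apply (h.2.2 i).1
  simpa using h2

/-- every class of `Ext(E,B)` comes from `A` when `Ext(E,C)=0`. -/
theorem ext_mid (E : LRep k Q) (h : IsSESL A B C f g) (hC : Function.Surjective (D E C))
    (b : ∀ x, E.V (Q.src x) →ₗ[k] B.V (Q.tgt x)) :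
    ∃ (a : ∀ x, E.V (Q.src x) →ₗ[k] A.V (Q.tgt x)) (β : ∀ i, E.V i →ₗ[k] B.V i),
      b = D E B β + fun x => f _ ∘ₗ a x := by
  obtain ⟨γ, hγ⟩ := hC (fun x => g _ ∘ₗ b x)
  have : ∀ i, ∃ β : E.V i →ₗ[k] B.V i, g _ ∘ₗ β = γ i := fun i =>
    Module.projective_lifting_property _ _ (h.2.2 _).2.1
  choose β hβ using this
  have : ∀ x, ∃ a : E.V (Q.src x) →ₗ[k] A.V (Q.tgt x), f _ ∘ₗ a = b x - D E B β x := by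
    intro x
    refine lift_exact (h.2.2 _).2.2 _ fun u => ?_
    have h1 := D_comp E h.2.1 β x
    have h2 : D E C (fun i => g i ∘ₗ β i) x = g _ ∘ₗ b x := by
      rw [show (fun i => g i ∘ₗ β i) = γ from funext hβ, hγ]
    rw [h2] at h1
    have h3 := congrArg (fun F => F u) h1
    simp only [LinearMap.comp_apply] at h3
    simp [h3]
  choose a ha using this
  refine ⟨a, β, funext fun x => ?_⟩
  simp [ha]

/-- lifting of homs `E → C` to `B` when `Ext(E,A)=0`. -/
theorem hom_lift (E : LRep k Q) (h : IsSESL A B C f g) (hA : Function.Surjective (D E A))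
    (γ : ∀ i, E.V i →ₗ[k] C.V i) (hγ : D E C γ = 0) :
    ∃ β : ∀ i, E.V i →ₗ[k] B.V i, D E B β = 0 ∧ (fun i => g i ∘ₗ β i) = γ := by
  have : ∀ i, ∃ β : E.V i →ₗ[k] B.V i, g _ ∘ₗ β = γ i := fun i =>
    Module.projective_lifting_property _ _ (h.2.2 _).2.1
  choose β hβ using this
  have : ∀ x, ∃ a : E.V (Q.src x) →ₗ[k] A.V (Q.tgt x), f _ ∘ₗ a = D E B β x := by
    intro x
    refine lift_exact (h.2.2 _).2.2 _ fun u => ?_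
    have h1 := D_comp E h.2.1 β x
    rw [show (fun i => g i ∘ₗ β i) = γ from funext hβ, hγ] at h1
    have h3 := congrArg (fun F => F u) h1
    simpa using h3.symm
  choose a ha using this
  obtain ⟨α, rfl⟩ := hA a
  refine ⟨β - fun i => f i ∘ₗ α i, ?_, ?_⟩
  · rw [map_sub, sub_eq_zero]
    funext x
    rw [D_comp E h.1, ha]
  · rw [← funext hβ]
    funext i; ext v
    have := (h.2.2 i).2.2.apply_apply_eq_zero (α i v)
    simp [this]

end perp

theorem thick_perp {P : LRep k Q → Prop} (hP : ThickL P) (E : LRep k Q) :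
    ThickL (fun M => P M ∧ Function.Bijective (D E M)) where
  summand := by
    rintro L M f g hf hg hgf ⟨hM, hi, hs⟩
    refine ⟨hP.summand L M f g hf hg hgf hM, ?_, ?_⟩
    · rw [injective_iff_map_eq_zero] at hi ⊢
      intro a ha
      have := hi (fun i => f i ∘ₗ a i) (funext fun x => by rw [D_comp E hf, ha]; simp)
      funext i; ext v
      have h2 := congrArg (fun F => g i (F i v)) this
      simpa [hgf] using h2
    · intro c
      obtain ⟨β, hβ⟩ := hs (fun x => f _ ∘ₗ c x)
      refine ⟨fun i => g i ∘ₗ β i, funext fun x => ?_⟩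
      rw [D_comp E hg, hβ]
      ext v; simp [hgf]
  ses := by
    intro A B C f g h
    obtain ⟨h1, h2, h3⟩ := hP.ses A B C f g h
    refine ⟨fun a b => ⟨h1 a.1 b.1, ?_, ext_right E h b.2.2⟩,
      fun a c => ⟨h2 a.1 c.1, ?_, ?_⟩, fun b c => ⟨h3 b.1 c.1, hom_left E h b.2.1, ?_⟩⟩
    · rw [injective_iff_map_eq_zero]
      intro γ hγ
      obtain ⟨β, hβ, rfl⟩ := hom_lift E h a.2.2 γ hγ
      have : β = 0 := b.2.1 (by rw [hβ, map_zero])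
      subst this
      funext i; ext v; simp
    · rw [injective_iff_map_eq_zero]
      intro β hβ
      have h4 : (fun i => g i ∘ₗ β i) = 0 := c.2.1 (by
        rw [map_zero]; funext x; rw [D_comp E h.2.1, hβ]; simp)
      have : ∀ i, ∃ α : E.V i →ₗ[k] A.V i, f _ ∘ₗ α = β i := fun i =>
        lift_exact (h.2.2 _).2.2 _ fun u => by
          simpa using congrArg (fun F => F i u) h4
      choose α hα using this
      have h5 : α = 0 := a.2.1 (by
        rw [map_zero]; funext x; ext v
        apply (h.2.2 _).1
        have := congrArg (fun F => F v) (D_comp E h.1 α x)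
        rw [show (fun i => f i ∘ₗ α i) = β from funext hα, hβ] at this
        simpa using this.symm)
      rw [← funext hα, h5]
      funext i; ext v; simp
    · intro b
      obtain ⟨a', β, rfl⟩ := ext_mid E h c.2.2 b
      obtain ⟨α, rfl⟩ := a.2.2 a'
      refine ⟨β + fun i => f i ∘ₗ α i, ?_⟩
      rw [map_add]; congr 1; funext x; rw [D_comp E h.1]
    · intro a
      obtain ⟨β, hβ⟩ := b.2.2 (fun x => f _ ∘ₗ a x)
      have h4 : (fun i => g i ∘ₗ β i) = 0 := c.2.1 (by
        rw [map_zero]; funext x; rw [D_comp E h.2.1, hβ]; ext v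
        simpa using (h.2.2 _).2.2.apply_apply_eq_zero (a x v))
      have : ∀ i, ∃ α : E.V i →ₗ[k] A.V i, f _ ∘ₗ α = β i := fun i =>
        lift_exact (h.2.2 _).2.2 _ fun u => by
          simpa using congrArg (fun F => F i u) h4
      choose α hα using this
      refine ⟨α, funext fun x => ?_⟩
      ext v
      apply (h.2.2 _).1
      have := congrArg (fun F => F v) (D_comp E h.1 α x)
      rw [show (fun i => f i ∘ₗ α i) = β from funext hα, hβ] at this
      simpa using this.symm

/-! Constructions -/

/-- `T` is the extension of `S` by `R` along a cocycle `c`. -/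
structure ExtData (R S T : LRep k Q) (c : ∀ x, S.V (Q.src x) →ₗ[k] R.V (Q.tgt x)) where
  inl : ∀ i, R.V i →ₗ[k] T.V i
  inr : ∀ i, S.V i →ₗ[k] T.V i
  fst : ∀ i, T.V i →ₗ[k] R.V i
  snd : ∀ i, T.V i →ₗ[k] S.V i
  fst_inl : ∀ i v, fst i (inl i v) = v
  fst_inr : ∀ i v, fst i (inr i v) = 0
  snd_inl : ∀ i v, snd i (inl i v) = 0
  snd_inr : ∀ i v, snd i (inr i v) = v
  total : ∀ i t, inl i (fst i t) + inr i (snd i t) = t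
  φ_inl : ∀ x v, T.φ x (inl _ v) = inl _ (R.φ x v)
  φ_inr : ∀ x v, T.φ x (inr _ v) = inl _ (c x v) + inr _ (S.φ x v)

theorem exists_ext (R S : LRep k Q) (c : ∀ x, S.V (Q.src x) →ₗ[k] R.V (Q.tgt x)) :
    ∃ T, Nonempty (ExtData R S T c) := by
  refine ⟨{ V := fun i => R.V i × S.V i
            acg := fun i => inferInstance
            mod := fun i => inferInstance
            fin := fun i => inferInstance
            φ := fun x => (R.φ x ∘ₗ LinearMap.fst k _ _ + c x ∘ₗ LinearMap.snd k _ _).prod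
              (S.φ x ∘ₗ LinearMap.snd k _ _) },
    ⟨{ inl := fun i => LinearMap.inl k (R.V i) (S.V i)
       inr := fun i => LinearMap.inr k (R.V i) (S.V i)
       fst := fun i => LinearMap.fst k (R.V i) (S.V i)
       snd := fun i => LinearMap.snd k (R.V i) (S.V i)
       fst_inl := fun i v => rfl
       fst_inr := fun i v => rfl
       snd_inl := fun i v => rfl
       snd_inr := fun i v => rfl
       total := fun i t => by simp
       φ_inl := fun x v => by simp
       φ_inr := fun x v => by simp }⟩⟩

namespace ExtData
variable {R S T : LRep k Q} {c : ∀ x, S.V (Q.src x) →ₗ[k] R.V (Q.tgt x)}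

theorem fst_φ (e : ExtData R S T c) (x t) : e.fst _ (T.φ x t) = R.φ x (e.fst _ t) + c x (e.snd _ t) := by
  conv_lhs => rw [← e.total _ t]
  simp only [map_add, e.φ_inl, e.φ_inr, e.fst_inl, e.fst_inr, add_zero]

theorem snd_φ (e : ExtData R S T c) (x t) : e.snd _ (T.φ x t) = S.φ x (e.snd _ t) := by
  conv_lhs => rw [← e.total _ t]
  simp only [map_add, e.φ_inl, e.φ_inr, e.snd_inl, e.snd_inr, zero_add]

theorem isSES (e : ExtData R S T c) : IsSESL R T S e.inl e.snd := by
  refine ⟨fun x v => (e.φ_inl x v).symm, fun x v => e.snd_φ x v, fun i => ⟨?_, ?_, ?_⟩⟩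
  · exact Function.LeftInverse.injective (e.fst_inl i)
  · exact Function.RightInverse.surjective (g := e.inr i) (e.snd_inr i)
  · intro t
    constructor
    · intro h
      refine ⟨e.fst i t, ?_⟩
      have := e.total i t
      rwa [h, map_zero, add_zero] at this
    · rintro ⟨v, rfl⟩
      exact e.snd_inl i v

end ExtData

theorem range_inv {R S : LRep k Q} {f} (hf : IsHom R S f) :
    ∀ x, ∀ v ∈ LinearMap.range (f (Q.src x)), S.φ x v ∈ LinearMap.range (f (Q.tgt x)) := by
  rintro x _ ⟨u, rfl⟩
  exact ⟨R.φ x u, hf x u⟩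

theorem ker_inv {R S : LRep k Q} {f} (hf : IsHom R S f) :
    ∀ x, ∀ v ∈ LinearMap.ker (f (Q.src x)), R.φ x v ∈ LinearMap.ker (f (Q.tgt x)) := by
  intro x v hv
  rw [LinearMap.mem_ker] at *
  rw [hf, hv, map_zero]

theorem exact_mkQ {A B : Type} [AddCommGroup A] [AddCommGroup B] [Module k A] [Module k B]
    (f : A →ₗ[k] B) : Function.Exact f (LinearMap.range f).mkQ := by
  rw [LinearMap.exact_iff, Submodule.ker_mkQ]

theorem exists_coker {R S : LRep k Q} {f} (hf : IsHom R S f) :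
    ∃ (Z : LRep k Q) (π : ∀ i, S.V i →ₗ[k] Z.V i), IsHom S Z π ∧
      (∀ i, Function.Surjective (π i)) ∧ ∀ i, Function.Exact (f i) (π i) := by
  refine ⟨{ V := fun i => S.V i ⧸ LinearMap.range (f i)
            acg := fun i => inferInstance
            mod := fun i => inferInstance
            fin := fun i => inferInstance
            φ := fun x => Submodule.mapQ _ _ (S.φ x) (range_inv hf x) },
    fun i => (LinearMap.range (f i)).mkQ, fun x v => rfl, fun i => Submodule.mkQ_surjective _,
    fun i => exact_mkQ (f i)⟩

theorem exact_ker {A B : Type} [AddCommGroup A] [AddCommGroup B] [Module k A] [Module k B]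
    (f : A →ₗ[k] B) : Function.Exact (LinearMap.ker f).subtype f.rangeRestrict := by
  rw [LinearMap.exact_iff, LinearMap.ker_rangeRestrict, Submodule.range_subtype]

theorem exists_img {R S : LRep k Q} {f} (hf : IsHom R S f) :
    ∃ (K I : LRep k Q) (ι : ∀ i, K.V i →ₗ[k] R.V i) (p : ∀ i, R.V i →ₗ[k] I.V i)
      (j : ∀ i, I.V i →ₗ[k] S.V i), IsSESL K R I ι p ∧ IsHom I S j ∧
      (∀ i, Function.Injective (j i)) ∧ (∀ i v, j i (p i v) = f i v) ∧
      (∀ i, Module.finrank k (K.V i) = Module.finrank k (LinearMap.ker (f i))) ∧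
      (∀ i, Module.finrank k (I.V i) = Module.finrank k (LinearMap.range (f i))) := by
  refine ⟨{ V := fun i => LinearMap.ker (f i)
            acg := fun i => inferInstance
            mod := fun i => inferInstance
            fin := fun i => inferInstance
            φ := fun x => (R.φ x).restrict (ker_inv hf x) },
          { V := fun i => LinearMap.range (f i)
            acg := fun i => inferInstance
            mod := fun i => inferInstance
            fin := fun i => inferInstance
            φ := fun x => (S.φ x).restrict (range_inv hf x) },
    fun i => (LinearMap.ker (f i)).subtype, fun i => (f i).rangeRestrict,
    fun i => (LinearMap.range (f i)).subtype,
    ⟨fun x v => rfl, fun x v => Subtype.ext (hf x v), fun i =>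
      ⟨Subtype.val_injective, (f i).surjective_rangeRestrict, exact_ker (f i)⟩⟩,
    fun x v => rfl, fun i => Subtype.val_injective, fun i v => rfl, fun i => rfl, fun i => rfl⟩

theorem img_mem {P : LRep k Q → Prop} (hP : ThickL P) {R S I : LRep k Q} {f} (hf : IsHom R S f)
    {p : ∀ i, R.V i →ₗ[k] I.V i} {j : ∀ i, I.V i →ₗ[k] S.V i} (hp : IsHom R I p)
    (hps : ∀ i, Function.Surjective (p i)) (hj : IsHom I S j)
    (hji : ∀ i, Function.Injective (j i)) (hjp : ∀ i v, j i (p i v) = f i v)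
    (hR : P R) (hS : P S) : P I := by
  obtain ⟨Z, π, hπ, hπs, hex⟩ := exists_coker hf
  -- a linear section of the quotient map
  have hsec : ∀ i, ∃ s : Z.V i →ₗ[k] S.V i, π i ∘ₗ s = LinearMap.id := fun i =>
    Module.projective_lifting_property _ _ (hπs i)
  choose s hs using hsec
  have hs' : ∀ i z, π i (s i z) = z := fun i z => congrArg (fun F => F z) (hs i)
  have hc : ∀ x, ∃ c : Z.V (Q.src x) →ₗ[k] R.V (Q.tgt x),
      f _ ∘ₗ c = S.φ x ∘ₗ s _ - s _ ∘ₗ Z.φ x := by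
    intro x
    refine lift_exact (hex _) _ fun z => ?_
    rw [LinearMap.sub_apply, LinearMap.comp_apply, LinearMap.comp_apply, map_sub, hs', hπ, hs',
      sub_self]
  choose c hc using hc
  have hc' : ∀ x z, f _ (c x z) = S.φ x (s _ z) - s _ (Z.φ x z) := fun x z =>
    congrArg (fun F => F z) (hc x)
  obtain ⟨L, ⟨l⟩⟩ := exists_ext R Z c
  obtain ⟨T, ⟨t⟩⟩ := exists_ext I L 0
  let F : ∀ i, R.V i →ₗ[k] T.V i := fun i => t.inl i ∘ₗ p i - t.inr i ∘ₗ l.inl i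
  let G : ∀ i, T.V i →ₗ[k] S.V i := fun i =>
    j i ∘ₗ t.fst i + (f i ∘ₗ l.fst i + s i ∘ₗ l.snd i) ∘ₗ t.snd i
  have hF : ∀ i v, F i v = t.inl i (p i v) - t.inr i (l.inl i v) := fun i v => rfl
  have hG : ∀ i u, G i u = j i (t.fst i u) + (f i (l.fst i (t.snd i u)) + s i (l.snd i (t.snd i u)))
    := fun i u => rfl
  have hses : IsSESL R T S F G := by
    refine ⟨fun x v => ?_, fun x u => ?_, fun i => ⟨?_, ?_, ?_⟩⟩
    · rw [hF, hF, map_sub, t.φ_inl, t.φ_inr, l.φ_inl, hp]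
      simp
    · rw [hG, hG, t.fst_φ, t.snd_φ, l.fst_φ, l.snd_φ, map_add, map_add, map_add, map_add, hj, hf,
        hc']
      simp only [Pi.zero_apply, LinearMap.zero_apply, map_zero]
      abel
    · intro a b hab
      have := congrArg (fun u => l.fst i (t.snd i u)) hab
      simpa [hF, t.snd_inl, t.snd_inr, l.fst_inl] using this
    · intro b
      obtain ⟨a, ha⟩ := (hex i (b - s i (π i b))).1 (by rw [map_sub, hs', sub_self])
      refine ⟨t.inr i (l.inl i a + l.inr i (π i b)), ?_⟩
      rw [hG]
      simp [t.fst_inr, t.snd_inr, l.fst_inl, l.fst_inr, l.snd_inl, l.snd_inr, ha]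
    · intro u
      constructor
      · intro h
        rw [hG] at h
        obtain ⟨v, hv⟩ := hps i (t.fst i u)
        rw [← hv, hjp] at h
        have hz : l.snd i (t.snd i u) = 0 := by
          have h2 := congrArg (π i) h
          rw [map_add, map_add, hs', (hex i).apply_apply_eq_zero,
            (hex i).apply_apply_eq_zero] at h2
          simpa using h2
        refine ⟨-l.fst i (t.snd i u), ?_⟩
        rw [hz, map_zero, add_zero] at h
        have h3 : p i (-l.fst i (t.snd i u)) = t.fst i u := by
          apply hji
          rw [hjp, map_neg, ← hv, hjp]
          exact (eq_neg_of_add_eq_zero_left h).symm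
        have h4 := l.total i (t.snd i u)
        rw [hz, map_zero, add_zero] at h4
        rw [hF, h3, map_neg, h4, map_neg, sub_neg_eq_add, t.total]
      · rintro ⟨b, rfl⟩
        rw [hF, hG]
        simp [t.fst_inl, t.fst_inr, t.snd_inl, t.snd_inr, l.fst_inl, l.snd_inl, hjp]
  have hT := (hP.ses _ _ _ _ _ hses).2.1 hR hS
  refine hP.summand I T t.inl t.fst t.isSES.1 ?_ t.fst_inl hT
  intro x v
  rw [t.fst_φ]
  simp

/-- total dimension -/
noncomputable def tot (R : LRep k Q) : ℕ := ∑ i, Module.finrank k (R.V i)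

/-- `E` behaves like a simple object of `P`. -/
def SimpleIn (P : LRep k Q → Prop) (E : LRep k Q) : Prop :=
  ∀ M, P M → ∀ f, IsHom E M f → f ≠ 0 → ∀ i, Function.Injective (f i)

theorem exists_simple {P : LRep k Q → Prop} (hP : ThickL P) (w : (Fin Q.n → ℤ) →+ ℤ)
    (hw : ∃ M, P M ∧ w M.dim ≠ 0) : ∃ E, P E ∧ w E.dim ≠ 0 ∧ SimpleIn P E := by
  classical
  have hex : ∃ m, ∃ M : LRep k Q, (P M ∧ w M.dim ≠ 0) ∧ M.tot = m := by
    obtain ⟨M, hM⟩ := hw; exact ⟨_, M, hM, rfl⟩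
  obtain ⟨E, hE, hm⟩ := Nat.find_spec hex
  have hmin : ∀ M : LRep k Q, P M → w M.dim ≠ 0 → E.tot ≤ M.tot := by
    intro M h1 h2
    rw [hm]
    exact Nat.find_min' hex ⟨M, ⟨h1, h2⟩, rfl⟩
  refine ⟨E, hE.1, hE.2, ?_⟩
  intro M hM f hf hf0
  obtain ⟨K, I, ι, p, j, hses, hj, hji, hjp, hKd, hId⟩ := exists_img hf
  have hIP : P I := img_mem hP hf hses.2.1 (fun i => (hses.2.2 i).2.1) hj hji hjp hE.1 hM
  have hKP : P K := (hP.ses _ _ _ _ _ hses).2.2 hE.1 hIP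
  have hrk := fun i => LinearMap.finrank_range_add_finrank_ker (f i)
  have hd : w E.dim = w K.dim + w I.dim := by
    rw [← map_add]
    congr 1
    funext i
    simp only [dim, Pi.add_apply]
    have := hrk i
    have := hKd i
    have := hId i
    omega
  by_cases hK : w K.dim = 0
  · have hI : w I.dim ≠ 0 := by
      intro h; rw [hK, h] at hd; exact hE.2 (by simpa using hd)
    have h1 := hmin _ hIP hI
    have h2 : ∀ i ∈ Finset.univ, Module.finrank k (I.V i) ≤ Module.finrank k (E.V i) :=
      fun i _ => by have := hrk i; have := hId i; omega
    have h3 := (Finset.sum_eq_sum_iff_of_le h2).1 (le_antisymm (Finset.sum_le_sum h2) h1)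
    intro i
    rw [← LinearMap.ker_eq_bot, ← Submodule.finrank_eq_zero (R := k)]
    have h4 := h3 i (Finset.mem_univ _)
    have := hrk i
    have := hId i
    omega
  · exfalso
    have h1 := hmin _ hKP hK
    have h2 : ∀ i ∈ Finset.univ, Module.finrank k (K.V i) ≤ Module.finrank k (E.V i) :=
      fun i _ => by have := hrk i; have := hKd i; omega
    have h3 := (Finset.sum_eq_sum_iff_of_le h2).1 (le_antisymm (Finset.sum_le_sum h2) h1)
    apply hf0
    funext i
    have h4 := h3 i (Finset.mem_univ _)
    rw [hKd] at h4
    exact LinearMap.ker_eq_top.1 (Submodule.eq_top_of_finrank_eq h4)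

theorem hom_one [IsAlgClosed k] {P : LRep k Q → Prop} {E : LRep k Q} (hE : P E)
    (hs : SimpleIn P E) (h0 : E.dim ≠ 0) : hom E E = 1 := by
  obtain ⟨i, hi⟩ := Function.ne_iff.1 h0
  have hnt : Nontrivial (E.V i) := by
    apply Module.nontrivial_of_finrank_pos (R := k)
    simp only [dim, Pi.zero_apply, ne_eq, Nat.cast_eq_zero] at hi
    omega
  have hid : (fun i => (LinearMap.id : E.V i →ₗ[k] E.V i)) ∈ LinearMap.ker (D E E) := by
    rw [LinearMap.mem_ker, ← isHom_iff]; intro x v; rfl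
  rw [hom, finrank_eq_one_iff']
  refine ⟨⟨_, hid⟩, ?_, ?_⟩
  · intro h
    have := congrArg (fun F => F.1 i) h
    obtain ⟨v, hv⟩ := exists_ne (0 : E.V i)
    exact hv (by simpa using congrArg (fun F => F v) this)
  · rintro ⟨f, hf⟩
    obtain ⟨c, hc⟩ := Module.End.exists_eigenvalue (K := k) (V := E.V i) (f i)
    refine ⟨c, ?_⟩
    have hmem := Submodule.sub_mem _ hf (Submodule.smul_mem _ c hid)
    obtain ⟨v, hv⟩ := hc.exists_hasEigenvector
    have hz : f - c • (fun i => (LinearMap.id : E.V i →ₗ[k] E.V i)) = 0 := by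
      by_contra hne
      have := hs E hE _ (isHom_iff.2 hmem) hne i
      refine hv.2 (this ?_)
      have := hv.apply_eq_smul
      simp [this]
    exact Subtype.ext (sub_eq_zero.1 hz).symm

/-- The reduction step: `E` and the perpendicular of `E` in `P` generate `P`. -/
theorem generate {P P' : LRep k Q → Prop} (hP : ThickL P) (hP' : ThickL P') {E : LRep k Q}
    (hE : P E) (hs : SimpleIn P E) (he : Function.Surjective (D E E)) (hE' : P' E)
    (hperp : ∀ M, P M → Function.Bijective (D E M) → P' M) : ∀ M, P M → P' M := by
  have step2 : ∀ m, ∀ M, P M → Function.Surjective (D E M) → hom E M = m → P' M := by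
    intro m
    induction m using Nat.strong_induction_on with
    | _ m ih =>
    intro M hM hsur hm
    by_cases hinj : Function.Injective (D E M)
    · exact hperp M hM ⟨hinj, hsur⟩
    · rw [injective_iff_map_eq_zero] at hinj
      push Not at hinj
      obtain ⟨f, hf, hf0⟩ := hinj
      have hfh := isHom_iff.2 hf
      obtain ⟨Z, π, hπ, hπs, hex⟩ := exists_coker hfh
      have hses : IsSESL E M Z f π := ⟨hfh, hπ, fun i => ⟨hs M hM f hfh hf0 i, hπs i, hex i⟩⟩
      have hZ := (hP.ses _ _ _ _ _ hses).1 hE hM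
      refine (hP'.ses _ _ _ _ _ hses).2.1 hE' (ih _ ?_ _ hZ (ext_right E hses hsur) rfl)
      -- hom decreases
      rw [← hm]
      let Φ : LinearMap.ker (D E M) →ₗ[k] LinearMap.ker (D E Z) :=
        { toFun := fun β => ⟨fun i => π i ∘ₗ β.1 i, by
            rw [LinearMap.mem_ker]; funext x
            rw [D_comp E hses.2.1, LinearMap.mem_ker.1 β.2]; simp⟩
          map_add' := by
            intro a b; apply Subtype.ext; funext i; ext v; simp
          map_smul' := by
            intro a b; apply Subtype.ext; funext i; ext v; simp }
      have hΦ : Function.Surjective Φ := by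
        rintro ⟨γ, hγ⟩
        obtain ⟨β, hβ, h⟩ := hom_lift E hses he γ hγ
        exact ⟨⟨β, hβ⟩, Subtype.ext h⟩
      have hk : LinearMap.ker Φ ≠ ⊥ := by
        intro h
        have : (⟨f, hf⟩ : LinearMap.ker (D E M)) ∈ LinearMap.ker Φ := by
          rw [LinearMap.mem_ker]; apply Subtype.ext; funext i; ext v
          exact (hses.2.2 i).2.2.apply_apply_eq_zero v
        rw [h, Submodule.mem_bot] at this
        exact hf0 (congrArg Subtype.val this)
      have h1 := LinearMap.finrank_range_add_finrank_ker Φ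
      rw [LinearMap.range_eq_top.2 hΦ, finrank_top] at h1
      have h2 : Module.finrank k (LinearMap.ker Φ) ≠ 0 := by
        rwa [Ne, Submodule.finrank_eq_zero]
      unfold hom
      omega
  have step1 : ∀ m, ∀ M, P M → ext E M = m → P' M := by
    intro m
    induction m using Nat.strong_induction_on with
    | _ m ih =>
    intro M hM hm
    by_cases hsur : Function.Surjective (D E M)
    · exact step2 _ M hM hsur rfl
    · have : ∃ c, c ∉ LinearMap.range (D E M) := by
        by_contra h; push Not at h; exact hsur fun c => h c
      obtain ⟨c, hc⟩ := this
      obtain ⟨N, ⟨e⟩⟩ := exists_ext M E c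
      have hses := e.isSES
      have hM' := (hP.ses _ _ _ _ _ hses).2.1 hM hE
      refine (hP'.ses _ _ _ _ _ hses).2.2 (ih _ ?_ _ hM' rfl) hE'
      rw [← hm]
      let Ψ : (∀ x : Fin Q.a, E.V (Q.src x) →ₗ[k] M.V (Q.tgt x)) →ₗ[k]
          (∀ x : Fin Q.a, E.V (Q.src x) →ₗ[k] N.V (Q.tgt x)) :=
        { toFun := fun a x => e.inl _ ∘ₗ a x
          map_add' := by
            intro a b; funext x; ext1 v; simp
          map_smul' := by
            intro a b; funext x; ext1 v; simp }
      have hΨr : LinearMap.range (D E M) ≤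
          (LinearMap.range (D E N)).comap Ψ := by
        rintro _ ⟨α, rfl⟩
        exact ⟨fun i => e.inl i ∘ₗ α i, funext fun x => D_comp E hses.1 α x⟩
      let Φ := Submodule.mapQ _ _ Ψ hΨr
      have hΦ : Function.Surjective Φ := by
        intro q
        obtain ⟨b, rfl⟩ := Submodule.mkQ_surjective _ q
        obtain ⟨a, β, rfl⟩ := ext_mid E hses he b
        refine ⟨Submodule.mkQ _ a, ?_⟩
        rw [map_add]
        have : (LinearMap.range (D E N)).mkQ (D E N β) = 0 := by
          rw [Submodule.mkQ_apply, Submodule.Quotient.mk_eq_zero]; exact ⟨β, rfl⟩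
        rw [this, zero_add]
        rfl
      have hk : LinearMap.ker Φ ≠ ⊥ := by
        intro h
        have : (LinearMap.range (D E M)).mkQ c ∈ LinearMap.ker Φ := by
          rw [LinearMap.mem_ker]
          change (LinearMap.range (D E N)).mkQ (Ψ c) = 0
          rw [Submodule.mkQ_apply, Submodule.Quotient.mk_eq_zero]
          refine ⟨-e.inr, ?_⟩
          funext x; ext1 v
          rw [map_neg, Pi.neg_apply, LinearMap.neg_apply, D_apply, e.φ_inr]
          change _ = e.inl _ (c x v)
          abel
        rw [h, Submodule.mem_bot, Submodule.mkQ_apply, Submodule.Quotient.mk_eq_zero] at this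
        exact hc this
      have h1 := LinearMap.finrank_range_add_finrank_ker Φ
      rw [LinearMap.range_eq_top.2 hΦ, finrank_top] at h1
      have h2 : Module.finrank k (LinearMap.ker Φ) ≠ 0 := by
        rwa [Ne, Submodule.finrank_eq_zero]
      unfold ext
      omega
  exact fun M hM => step1 _ M hM rfl

/-- Existence of a simple-like exceptional object. -/
theorem exists_exc [IsAlgClosed k] (hq : ∀ d, 0 ≤ Q.euler d d) {P : LRep k Q → Prop}
    (hP : ThickL P) (w : (Fin Q.n → ℤ) →+ ℤ) (hw : ∃ M, P M ∧ w M.dim ≠ 0)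
    (hiso : ∀ M, P M → Q.euler M.dim M.dim = 0 → w M.dim = 0) :
    ∃ E, P E ∧ w E.dim ≠ 0 ∧ SimpleIn P E ∧ hom E E = 1 ∧ ext E E = 0 := by
  obtain ⟨E, hE, hwE, hs⟩ := exists_simple hP w hw
  have h1 := hom_one hE hs (fun h => hwE (by rw [h, map_zero]))
  refine ⟨E, hE, hwE, hs, h1, ?_⟩
  by_contra hne
  apply hwE
  apply hiso E hE
  have h2 := euler_eq E E
  have h3 := hq E.dim
  rw [h1] at h2
  push_cast at h2
  omega

def ExcSeqL {r : ℕ} (E : Fin r → LRep k Q) : Prop :=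
  (∀ i, hom (E i) (E i) = 1 ∧ ext (E i) (E i) = 0) ∧
    ∀ i j, i < j → hom (E i) (E j) = 0 ∧ ext (E i) (E j) = 0

theorem excSeq_cons {r : ℕ} {E : Fin r → LRep k Q} (hE : ExcSeqL E) {X : LRep k Q}
    (h1 : hom X X = 1) (h2 : ext X X = 0) (hX : ∀ i, Function.Bijective (D X (E i))) :
    ExcSeqL (Fin.cons X E : Fin (r + 1) → LRep k Q) := by
  refine ⟨?_, ?_⟩
  · intro i
    refine Fin.cases ?_ (fun i => ?_) i
    · exact ⟨h1, h2⟩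
    · exact hE.1 i
  · intro i j
    refine Fin.cases ?_ (fun i => ?_) i
    · refine Fin.cases ?_ (fun j => ?_) j
      · intro h; exact absurd h (lt_irrefl _)
      · intro _
        exact ⟨hom_eq_zero.2 (hX j).1, ext_eq_zero.2 (hX j).2⟩
    · refine Fin.cases ?_ (fun j => ?_) j
      · intro h; exact absurd h (by simp)
      · intro h
        exact hE.2 i j (by simpa using h)

/-- The rational span of the dimension vectors. -/
def dspan (P : LRep k Q → Prop) : Submodule ℚ (Fin Q.n → ℚ) :=
  Submodule.span ℚ {v | ∃ M, P M ∧ v = fun i => (M.dim i : ℚ)}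

theorem dspan_lt {P : LRep k Q → Prop} {E : LRep k Q} (hE : P E) (h1 : hom E E = 1)
    (h2 : ext E E = 0) : dspan (fun M => P M ∧ Function.Bijective (D E M)) < dspan P := by
  refine lt_of_le_of_ne (Submodule.span_mono ?_) ?_
  · rintro v ⟨M, hM, rfl⟩; exact ⟨M, hM.1, rfl⟩
  · intro heq
    let ℓ : (Fin Q.n → ℚ) →ₗ[ℚ] ℚ :=
      ∑ i, (E.dim i : ℚ) • LinearMap.proj i - ∑ x, (E.dim (Q.src x) : ℚ) • LinearMap.proj (Q.tgt x)
    have hℓ : ∀ M : LRep k Q, ℓ (fun i => (M.dim i : ℚ)) = ((Q.euler E.dim M.dim : ℤ) : ℚ) := by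
      intro M
      simp [ℓ, FinQuiver.euler, LinearMap.sum_apply]
    have hle : dspan (fun M => P M ∧ Function.Bijective (D E M)) ≤ LinearMap.ker ℓ := by
      refine Submodule.span_le.2 ?_
      rintro v ⟨M, hM, rfl⟩
      rw [SetLike.mem_coe, LinearMap.mem_ker, hℓ, euler_eq, hom_eq_zero.2 hM.2.1,
        ext_eq_zero.2 hM.2.2]
      simp
    have hmem : (fun i => (E.dim i : ℚ)) ∈ dspan P := Submodule.subset_span ⟨E, hE, rfl⟩
    rw [← heq] at hmem
    have := hle hmem
    rw [LinearMap.mem_ker, hℓ, euler_eq, h1, h2] at this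
    simp at this

theorem gen_definite [IsAlgClosed k] (hq : ∀ d, 0 ≤ Q.euler d d) :
    ∀ m, ∀ P : LRep k Q → Prop, ThickL P → Module.finrank ℚ (dspan P) = m →
      (∀ M, P M → Q.euler M.dim M.dim = 0 → M.dim = 0) →
      ∃ (r : ℕ) (E : Fin r → LRep k Q), ExcSeqL E ∧ (∀ i, P (E i)) ∧
        ∀ P' : LRep k Q → Prop, ThickL P' → (∃ M, P' M) → (∀ i, P' (E i)) → ∀ M, P M → P' M := by
  intro m
  induction m using Nat.strong_induction_on with
  | _ m ih =>
  intro P hP hm hdef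
  let w : (Fin Q.n → ℤ) →+ ℤ := ∑ i, Pi.evalAddMonoidHom (fun _ => ℤ) i
  have hw : ∀ d, w d = ∑ i, d i := fun d => by simp [w]
  by_cases hex : ∃ M, P M ∧ w M.dim ≠ 0
  · obtain ⟨X, hX, -, hs, h1, h2⟩ := exists_exc hq hP w hex
      (fun M hM h => by rw [hdef M hM h, map_zero])
    obtain ⟨r, E, hE, hPE, hgen⟩ := ih _ (by
      rw [← hm]; exact Submodule.finrank_lt_finrank_of_lt (dspan_lt hX h1 h2))
      (fun M => P M ∧ Function.Bijective (D X M)) (thick_perp hP X) rfl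
      (fun M hM h => hdef M hM.1 h)
    refine ⟨r + 1, Fin.cons X E, excSeq_cons hE h1 h2 (fun i => (hPE i).2), ?_, ?_⟩
    · intro i
      refine Fin.cases hX (fun i => ?_) i
      exact (hPE i).1
    · intro P' hP' hne hPE'
      refine generate hP hP' hX hs (ext_eq_zero.1 h2) (hPE' 0) ?_
      intro M hM hb
      exact hgen P' hP' hne (fun i => hPE' i.succ) M ⟨hM, hb⟩
  · push Not at hex
    refine ⟨0, Fin.elim0, ⟨fun i => i.elim0, fun i => i.elim0⟩, fun i => i.elim0, ?_⟩
    rintro P' hP' ⟨N, hN⟩ - M hM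
    have h0 := hex M hM
    rw [hw] at h0
    have h1 := (Finset.sum_eq_zero_iff_of_nonneg (fun i _ => by simp [dim])).1 h0
    have hsub : ∀ i, Subsingleton (M.V i) := fun i => by
      rw [← Module.finrank_zero_iff (R := k)]
      simpa [dim] using h1 i (Finset.mem_univ _)
    refine hP'.summand M N 0 0 (fun x v => by simp) (fun x v => by simp)
      (fun i v => Subsingleton.elim _ _) hN

theorem euler_add_left (a b c : Fin Q.n → ℤ) : Q.euler (a + b) c = Q.euler a c + Q.euler b c := by
  simp only [FinQuiver.euler, Pi.add_apply, add_mul, Finset.sum_add_distrib]; ring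
theorem euler_add_right (a b c : Fin Q.n → ℤ) : Q.euler a (b + c) = Q.euler a b + Q.euler a c := by
  simp only [FinQuiver.euler, Pi.add_apply, mul_add, Finset.sum_add_distrib]; ring
theorem euler_smul_left (m : ℤ) (a b : Fin Q.n → ℤ) : Q.euler (m • a) b = m * Q.euler a b := by
  simp only [FinQuiver.euler, Pi.smul_apply, smul_eq_mul, mul_assoc, mul_sub, Finset.mul_sum]
theorem euler_smul_right (m : ℤ) (a b : Fin Q.n → ℤ) : Q.euler a (m • b) = m * Q.euler a b := by
  simp only [FinQuiver.euler, Pi.smul_apply, smul_eq_mul, mul_sub, Finset.mul_sum]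
  congr 1 <;> exact Finset.sum_congr rfl fun _ _ => by ring

theorem euler_radical (hq : ∀ d, 0 ≤ Q.euler d d) {δ : Fin Q.n → ℤ} (hδ : Q.euler δ δ = 0)
    (d : Fin Q.n → ℤ) : Q.euler δ d + Q.euler d δ = 0 := by
  by_contra hne
  set s := Q.euler δ d + Q.euler d δ with hs
  have h := hq ((-s * (Q.euler d d + 1)) • δ + d)
  rw [euler_add_left, euler_add_right, euler_add_right, euler_smul_left, euler_smul_left,
    euler_smul_right, euler_smul_right, hδ] at h
  have h2 : 0 ≤ -s * (Q.euler d d + 1) * s + Q.euler d d := by rw [hs] at h ⊢; linarith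
  have h3 : 1 ≤ s * s := by
    have : 0 < s * s := mul_self_pos.2 hne
    omega
  nlinarith [hq d]

theorem gen_main [IsAlgClosed k] (hq : ∀ d, 0 ≤ Q.euler d d) {δ : Fin Q.n → ℤ}
    (hδ : Q.IsNullRoot δ) {P : LRep k Q → Prop} (hP : ThickL P)
    (hX : ∃ X, P X ∧ Q.euler δ X.dim ≠ 0) :
    ∃ (r : ℕ) (E : Fin r → LRep k Q), ExcSeqL E ∧ (∀ i, P (E i)) ∧
      ∀ P' : LRep k Q → Prop, ThickL P' → (∀ i, P' (E i)) → ∀ M, P M → P' M := by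
  let w : (Fin Q.n → ℤ) →+ ℤ := AddMonoidHom.mk' (fun d => Q.euler δ d) (euler_add_right δ)
  obtain ⟨X, hX, hwX, hs, h1, h2⟩ := exists_exc hq hP w hX (fun M hM h => by
    obtain ⟨m, hm⟩ := hδ.2.2 _ h
    change Q.euler δ M.dim = 0
    rw [hm, euler_smul_right, hδ.2.1, mul_zero])
  obtain ⟨r, E, hE, hPE, hgen⟩ := gen_definite hq _ (fun M => P M ∧ Function.Bijective (D X M))
    (thick_perp hP X) rfl (fun M hM h => by
      obtain ⟨m, hm⟩ := hδ.2.2 _ h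
      have h3 := euler_eq X M
      rw [hom_eq_zero.2 hM.2.1, ext_eq_zero.2 hM.2.2, hm, euler_smul_right] at h3
      have h4 := euler_radical hq hδ.2.1 X.dim
      have h5 : Q.euler X.dim δ ≠ 0 := by
        intro h; apply hwX; change Q.euler δ X.dim = 0; omega
      have : m = 0 := by simpa [h5] using h3
      rw [hm, this, zero_smul])
  refine ⟨r + 1, Fin.cons X E, excSeq_cons hE h1 h2 (fun i => (hPE i).2), ?_, ?_⟩
  · intro i
    refine Fin.cases hX (fun i => ?_) i
    exact (hPE i).1
  · intro P' hP' hPE'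
    refine generate hP hP' hX hs (ext_eq_zero.1 h2) (hPE' 0) ?_
    intro M hM hb
    exact hgen P' hP' ⟨X, hPE' 0⟩ (fun i => hPE' i.succ) M ⟨hM, hb⟩

/-! Translation to matrices -/

noncomputable def real (R : LRep k Q) : QRep k Q where
  d i := Module.finrank k (R.V i)
  mat x := LinearMap.toMatrix (Module.finBasis k _) (Module.finBasis k _) (R.φ x)

noncomputable def bas (R : LRep k Q) (i) : Module.Basis (Fin ((real R).d i)) k (R.V i) :=
  Module.finBasis k (R.V i)

theorem real_mat (R : LRep k Q) (x) :
    (real R).mat x = LinearMap.toMatrix (R.bas _) (R.bas _) (R.φ x) := rfl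

noncomputable def ofQ (M : QRep k Q) : LRep k Q where
  V i := Fin (M.d i) → k
  acg i := inferInstance
  mod i := inferInstance
  fin i := inferInstance
  φ x := (M.mat x).mulVecLin

noncomputable def toM (R S : LRep k Q) (f : ∀ i, R.V i →ₗ[k] S.V i) :
    ∀ i, Matrix (Fin ((real S).d i)) (Fin ((real R).d i)) k :=
  fun i => LinearMap.toMatrix (R.bas i) (S.bas i) (f i)

theorem toM_mem {R S : LRep k Q} {f} (hf : IsHom R S f) : toM R S f ∈ QRep.homSpace (real R) (real S) := by
  intro x
  simp only [toM, real_mat]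
  rw [← LinearMap.toMatrix_comp, ← LinearMap.toMatrix_comp]
  congr 1
  ext v
  exact hf x v

noncomputable def eqH (R S : LRep k Q) : (∀ i, R.V i →ₗ[k] S.V i) ≃ₗ[k]
    (∀ i, Matrix (Fin ((real S).d i)) (Fin ((real R).d i)) k) :=
  LinearEquiv.piCongrRight fun i => LinearMap.toMatrix (R.bas i) (S.bas i)

noncomputable def eqX (R S : LRep k Q) :
    (∀ x : Fin Q.a, R.V (Q.src x) →ₗ[k] S.V (Q.tgt x)) ≃ₗ[k]
    (∀ x : Fin Q.a, Matrix (Fin ((real S).d (Q.tgt x))) (Fin ((real R).d (Q.src x))) k) :=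
  LinearEquiv.piCongrRight fun x => LinearMap.toMatrix (R.bas _) (S.bas _)

theorem extMap_eq (R S : LRep k Q) (f) :
    QRep.extMap (real R) (real S) (eqH R S f) = eqX R S (D R S f) := by
  funext x
  change LinearMap.toMatrix (R.bas _) (S.bas _) (f (Q.tgt x)) * (real R).mat x -
      (real S).mat x * LinearMap.toMatrix (R.bas _) (S.bas _) (f (Q.src x)) =
    LinearMap.toMatrix (R.bas _) (S.bas _) (f (Q.tgt x) ∘ₗ R.φ x - S.φ x ∘ₗ f (Q.src x))
  rw [map_sub, real_mat, real_mat, ← LinearMap.toMatrix_comp, ← LinearMap.toMatrix_comp]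

theorem homDim_real (R S : LRep k Q) : QRep.homDim (real R) (real S) = hom R S := by
  have h : QRep.homSpace (real R) (real S) = (LinearMap.ker (D R S)).map (eqH R S).toLinearMap := by
    ext g
    obtain ⟨f, rfl⟩ := (eqH R S).surjective g
    have h1 : eqH R S f ∈ QRep.homSpace (real R) (real S) ↔
        QRep.extMap (real R) (real S) (eqH R S f) = 0 := by
      constructor
      · intro h; funext x; exact sub_eq_zero.2 (h x)
      · intro h x; exact sub_eq_zero.1 (congrArg (fun F => F x) h)
    rw [h1, extMap_eq]
    simp
  rw [QRep.homDim, hom, h]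
  exact LinearEquiv.finrank_map_eq (eqH R S) _

theorem extDim_real (R S : LRep k Q) : QRep.extDim (real R) (real S) = ext R S := by
  rw [QRep.extDim, ext]
  refine (LinearEquiv.finrank_eq (Submodule.Quotient.equiv _ _ (eqX R S) ?_)).symm
  ext g
  constructor
  · rintro ⟨_, ⟨f, rfl⟩, rfl⟩
    exact ⟨eqH R S f, extMap_eq R S f⟩
  · rintro ⟨f, rfl⟩
    obtain ⟨f, rfl⟩ := (eqH R S).surjective f
    exact ⟨_, ⟨f, rfl⟩, (extMap_eq R S f).symm⟩

theorem toM_mulVec (R S : LRep k Q) (f) (i) (v : Fin ((real R).d i) → k) :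
    (toM R S f i).mulVecLin v = (S.bas i).equivFun (f i ((R.bas i).equivFun.symm v)) := by
  have := LinearMap.toMatrix_mulVec_repr (R.bas i) (S.bas i) (f i) ((R.bas i).equivFun.symm v)
  have h2 : ⇑((R.bas i).repr ((R.bas i).equivFun.symm v)) = v := by
    have := (R.bas i).equivFun.apply_symm_apply v
    rwa [Module.Basis.equivFun_apply] at this
  rw [h2] at this
  rw [Matrix.mulVecLin_apply, Module.Basis.equivFun_apply]
  exact this

theorem ses_real {A B C : LRep k Q} {f g} (h : IsSESL A B C f g) :
    QRep.IsSES (real A) (real B) (real C) (toM A B f) (toM B C g) := by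
  refine ⟨toM_mem h.1, toM_mem h.2.1, fun i => ⟨?_, ?_, ?_⟩⟩
  · intro u v huv
    rw [toM_mulVec, toM_mulVec] at huv
    exact (A.bas i).equivFun.symm.injective ((h.2.2 i).1 ((B.bas i).equivFun.injective huv))
  · intro w
    obtain ⟨b, hb⟩ := (h.2.2 i).2.1 ((C.bas i).equivFun.symm w)
    refine ⟨(B.bas i).equivFun b, ?_⟩
    rw [toM_mulVec, LinearEquiv.symm_apply_apply, hb, LinearEquiv.apply_symm_apply]
  · ext v
    rw [LinearMap.mem_ker, toM_mulVec, LinearEquiv.map_eq_zero_iff, (h.2.2 i).2.2 _]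
    constructor
    · rintro ⟨u, rfl⟩
      refine ⟨(A.bas i).equivFun.symm u, ?_⟩
      rw [toM_mulVec, LinearEquiv.symm_apply_apply]
    · rintro ⟨a, ha⟩
      refine ⟨(A.bas i).equivFun a, ?_⟩
      rw [toM_mulVec, LinearEquiv.symm_apply_apply, ha, LinearEquiv.apply_symm_apply]

theorem thick_real {C : QRep k Q → Prop} (hC : QRep.Thick C) : ThickL (fun R => C (real R)) where
  summand := by
    intro L M f g hf hg hgf hM
    refine hC.2.1 _ _ ⟨toM L M f, toM_mem hf, toM M L g, toM_mem hg, fun i => ?_⟩ hM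
    simp only [toM]
    have h1 := LinearMap.toMatrix_comp (L.bas i) (M.bas i) (L.bas i) (g i) (f i)
    have h2 : g i ∘ₗ f i = LinearMap.id := by ext v; exact hgf i v
    rw [h2, LinearMap.toMatrix_id] at h1
    exact h1.symm
  ses := fun A B C f g h => hC.2.2 _ _ _ _ _ (ses_real h)

theorem iso_ofQ (M : QRep k Q) : QRep.IsoRep M (real (ofQ M)) ∧ QRep.IsoRep (real (ofQ M)) M := by
  let b : ∀ i, Module.Basis (Fin (M.d i)) k ((ofQ M).V i) := fun i => Pi.basisFun k (Fin (M.d i))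
  let f : ∀ i, Matrix (Fin ((real (ofQ M)).d i)) (Fin (M.d i)) k := fun i =>
    LinearMap.toMatrix (b i) ((ofQ M).bas i) LinearMap.id
  let g : ∀ i, Matrix (Fin (M.d i)) (Fin ((real (ofQ M)).d i)) k := fun i =>
    LinearMap.toMatrix ((ofQ M).bas i) (b i) LinearMap.id
  have hmat : ∀ x, M.mat x = LinearMap.toMatrix (b _) (b _) ((ofQ M).φ x) := by
    intro x
    exact (LinearMap.toMatrix'_toLin' (M.mat x)).symm
  have hf : f ∈ QRep.homSpace M (real (ofQ M)) := by
    intro x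
    rw [hmat]
    simp only [f, real_mat]
    rw [← LinearMap.toMatrix_comp, ← LinearMap.toMatrix_comp]; rfl
  have hg : g ∈ QRep.homSpace (real (ofQ M)) M := by
    intro x
    rw [hmat]
    simp only [g, real_mat]
    rw [← LinearMap.toMatrix_comp, ← LinearMap.toMatrix_comp]; rfl
  have hfg : ∀ i, f i * g i = 1 := by
    intro i
    simp only [f, g]
    rw [← LinearMap.toMatrix_comp]
    exact LinearMap.toMatrix_id _
  have hgf : ∀ i, g i * f i = 1 := by
    intro i
    simp only [f, g]
    rw [← LinearMap.toMatrix_comp]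
    exact LinearMap.toMatrix_id _
  have e1 : ∀ i, Function.LeftInverse (g i).mulVecLin (f i).mulVecLin := fun i v => by
    simp [Matrix.mulVecLin_apply, Matrix.mulVec_mulVec, hgf]
  have e2 : ∀ i, Function.LeftInverse (f i).mulVecLin (g i).mulVecLin := fun i v => by
    simp [Matrix.mulVecLin_apply, Matrix.mulVec_mulVec, hfg]
  exact ⟨⟨f, hf, fun i => ⟨(e1 i).injective, (e2 i).surjective⟩⟩,
    ⟨g, hg, fun i => ⟨(e2 i).injective, (e1 i).surjective⟩⟩⟩

theorem dim_ofQ (M : QRep k Q) : (ofQ M).dim = M.dimVec := by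
  funext i
  simp only [dim, QRep.dimVec]
  congr 1
  exact Module.finrank_fin_fun k

theorem indec_of_homDim {M : QRep k Q} (h : QRep.homDim M M = 1) : QRep.Indec M := by
  have hid : (1 : ∀ i, Matrix (Fin (M.d i)) (Fin (M.d i)) k) ∈ QRep.homSpace M M := by
    intro x; simp
  by_cases h0 : ∃ i, M.d i ≠ 0
  · refine ⟨h0, ?_⟩
    obtain ⟨i, hi⟩ := h0
    have hne : Nonempty (Fin (M.d i)) := ⟨⟨0, Nat.pos_of_ne_zero hi⟩⟩
    have h1 : (⟨1, hid⟩ : QRep.homSpace M M) ≠ 0 := by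
      intro h
      have := congrArg (fun F => F.1 i) h
      exact one_ne_zero (α := Matrix (Fin (M.d i)) (Fin (M.d i)) k) this
    intro f hf hff
    obtain ⟨c, hc⟩ := (finrank_eq_one_iff_of_nonzero' _ h1).1 h ⟨f, hf⟩
    have hc' : c • (1 : ∀ i, Matrix (Fin (M.d i)) (Fin (M.d i)) k) = f := congrArg Subtype.val hc
    have h2 := hff i
    rw [← hc'] at h2
    have h3 := congrFun (congrFun h2 hne.some) hne.some
    have h4 : c * c = c := by simpa using h3
    have h5 : c * (c - 1) = 0 := by linear_combination h4
    rcases mul_eq_zero.1 h5 with h6 | h6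
    · left; rw [← hc', h6, zero_smul]
    · right; rw [← hc', sub_eq_zero.1 h6, one_smul]
  · exfalso
    push Not at h0
    have : Subsingleton (QRep.homSpace M M) := by
      refine ⟨fun a b => Subtype.ext (funext fun i => ?_)⟩
      ext p q
      have h5 := h0 i; have h6 := p.2; omega
    rw [QRep.homDim, Module.finrank_zero_of_subsingleton] at h
    exact zero_ne_one h

end LRep

open QRep in
/-- a thick subcategory of rep(Q), `Q` Euclidean, containing a
preprojective or preinjective indecomposable (⟨δ, dim X⟩ ≠ 0) is generated by an
exceptional sequence. -/
theorem thick_with_nonregular_generated_by_excSeq (k : Type) [Field k]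
    [IsAlgClosed k] (Q : FinQuiver) (hQ : Q.IsEuclidean)
    (δ : Fin Q.n → ℤ) (hδ : Q.IsNullRoot δ)
    (C : QRep k Q → Prop) (hC : Thick C)
    (X : QRep k Q) (hX : C X) (hXind : Indec X)
    (hXnr : Q.euler δ X.dimVec ≠ 0) :
    ∃ (r : ℕ) (E : Fin r → QRep k Q), ExcSeq E ∧
      GeneratedBy C (Set.range E) := by
  obtain ⟨r, E, hE, hCE, hgen⟩ := LRep.gen_main hQ.2.2.1 hδ (LRep.thick_real hC)
    ⟨LRep.ofQ X, hC.1 _ _ (LRep.iso_ofQ X).1 hX, by rwa [LRep.dim_ofQ]⟩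
  refine ⟨r, fun i => LRep.real (E i), ⟨fun i => ?_, fun i j hij => ?_⟩, hC, ?_, ?_⟩
  · have h1 : homDim (LRep.real (E i)) (LRep.real (E i)) = 1 := by
      rw [LRep.homDim_real]; exact (hE.1 i).1
    refine ⟨⟨LRep.indec_of_homDim h1, ?_⟩, h1⟩
    rw [LRep.extDim_real]; exact (hE.1 i).2
  · rw [LRep.homDim_real, LRep.extDim_real]; exact hE.2 i j hij
  · rintro _ ⟨i, rfl⟩; exact hCE i
  · intro P' hP' hPE M hM
    have h1 := hgen _ (LRep.thick_real hP') (fun i => hPE _ ⟨i, rfl⟩) (LRep.ofQ M)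
      (hC.1 _ _ (LRep.iso_ofQ M).1 hM)
    exact hP'.1 _ _ (LRep.iso_ofQ M).2 h1
end
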